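/- arXiv:2603.25957 — 2 statements merged into one kernel-verified Lean document; each statement's English description precedes it below -/
import Mathlib

section
/- Fix γ ∈ (1,2), Φ_ℓ, Φ_r ∈ ℝ and an integer n ≥ 2. Let Φ_ss^n be the unique solution of the discrete stationary equation and μ_ss^n the associated Gaussian product measure. Then for every smooth compactly supported f : ℝ^{Λ_n} → ℝ, ∫ f (−𝓛_n f) dμ_ss^n = n^γ [ ∫ (∂_{φ(1)} f)² dμ_ss^n + ∫ (∂_{φ(n−1)} f)² dμ_ss^n + (1/2) ∑_{x,y∈Λ_n} p(y−x) ∫ (∂_{φ(y)} f − ∂_{φ(x)} f)² dμ_ss^n ]. -/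
open MeasureTheory Filter ENNReal NNReal

noncomputable section

/-- The normalizing constant `c_γ = (∑_{z∈ℤ, z≠0} |z|^{-(1+γ)})⁻¹`. -/
def cGamma (γ : ℝ) : ℝ := (∑' z : ℤ, if z = 0 then (0:ℝ) else |(z : ℝ)| ^ (-(1 + γ)))⁻¹

/-- The long-range kernel `p(z) = c_γ |z|^{-(1+γ)}` for `z ≠ 0`, `p(0) = 0`. -/
def pker (γ : ℝ) (z : ℝ) : ℝ := if z = 0 then 0 else cGamma γ * |z| ^ (-(1 + γ))

/-- The discrete lattice `Λ_n = {1, …, n−1}`. -/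
abbrev Lam (n : ℕ) : Finset ℕ := Finset.Icc 1 (n - 1)

/-- The configuration space `ℝ^{Λ_n}`. -/
abbrev Conf (n : ℕ) := (↥(Lam n) → ℝ)

/-- The partial derivative `∂_{φ(k)} f` (with value `0` for `k ∉ Λ_n`). -/
def pdN (n : ℕ) (k : ℕ) (f : Conf n → ℝ) (φ : Conf n) : ℝ :=
  if h : k ∈ Lam n then deriv (fun a => f (Function.update φ ⟨k, h⟩ a)) (φ ⟨k, h⟩) else 0

/-- The coordinate `φ(k)` (with value `0` for `k ∉ Λ_n`). -/
def coordN (n : ℕ) (k : ℕ) (φ : Conf n) : ℝ := if h : k ∈ Lam n then φ ⟨k, h⟩ else 0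

/-- The bulk part of the Ginzburg–Landau generator. -/
def GLbulk (γ : ℝ) (n : ℕ) (f : Conf n → ℝ) (φ : Conf n) : ℝ :=
  (1/2) * ∑ x ∈ Lam n, ∑ y ∈ Lam n, pker γ ((y : ℝ) - (x : ℝ)) *
    ((coordN n x φ - coordN n y φ) * (pdN n y f φ - pdN n x f φ)
      + (pdN n y (pdN n y f) φ - pdN n y (pdN n x f) φ
          - pdN n x (pdN n y f) φ + pdN n x (pdN n x f) φ))

/-- The left boundary part of the Ginzburg–Landau generator. -/
def GLleft (Φl : ℝ) (n : ℕ) (f : Conf n → ℝ) (φ : Conf n) : ℝ :=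
  pdN n 1 (pdN n 1 f) φ + (Φl - coordN n 1 φ) * pdN n 1 f φ

/-- The right boundary part of the Ginzburg–Landau generator. -/
def GLright (Φr : ℝ) (n : ℕ) (f : Conf n → ℝ) (φ : Conf n) : ℝ :=
  pdN n (n - 1) (pdN n (n - 1) f) φ + (Φr - coordN n (n - 1) φ) * pdN n (n - 1) f φ

/-- The boundary-driven long-range Ginzburg–Landau generator
`𝓛_n = n^γ (𝓛^ℓ + 𝓛^r + 𝓛^{bulk})`. -/
def GLgen (γ Φl Φr : ℝ) (n : ℕ) (f : Conf n → ℝ) (φ : Conf n) : ℝ :=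
  (n : ℝ) ^ γ * (GLleft Φl n f φ + GLright Φr n f φ + GLbulk γ n f φ)

/-- The Gaussian product measure on `ℝ^{Λ_n}` with unit variances and mean `m x` at
coordinate `x`. -/
def gaussianProduct (n : ℕ) (m : ℕ → ℝ) : Measure (Conf n) :=
  Measure.pi fun x => ProbabilityTheory.gaussianReal (m (x : ℕ)) 1

/-- The discrete stationary equation for the profile `ψ` on `Λ_n = {1, …, n−1}`. -/
def IsDiscreteProfile (γ Φl Φr : ℝ) (n : ℕ) (ψ : ℕ → ℝ) : Prop :=
  ∀ x ∈ Lam n,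
    (∑ y ∈ Lam n, pker γ ((y : ℝ) - (x : ℝ)) * (ψ y - ψ x))
      + (if x = 1 then Φl - ψ 1 else 0) + (if x = n - 1 then Φr - ψ (n - 1) else 0) = 0

/-!
Every reservoir and every bond of the dynamics contributes an Ornstein–Uhlenbeck operator
`∂_w² + (c - w · φ) ∂_w`, along `w = e_x` for a reservoir at `x` and `w = e_y - e_x` for a bond.
Gaussian integration by parts turns `∫ f (∂_w² f + (c - w · φ) ∂_w f)` into
`-∫ (∂_w f)² + (c - w · m) ∫ f ∂_w f`, where `m` is the mean of the Gaussian product measure. The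
last integral is linear in `w`, so after a summation by parts, which uses the symmetry of `p`, the
first-order terms of reservoirs and bonds add up to `∑_x (stationary equation at x) ∫ f ∂_x f = 0`.
-/

section ProductGaussian

open ProbabilityTheory

lemma pi_withDensity_ofReal {ι : Type*} [Fintype ι] {E : ι → Type*} [∀ i, MeasurableSpace (E i)]
    (μ : ∀ i, Measure (E i)) [∀ i, SigmaFinite (μ i)] {ρ : ∀ i, E i → ℝ}
    (hρ_nonneg : ∀ i x, 0 ≤ ρ i x) (hρ : ∀ i, Integrable (ρ i) (μ i)) :
    Measure.pi (fun i ↦ (μ i).withDensity fun x ↦ ENNReal.ofReal (ρ i x)) =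
      (Measure.pi μ).withDensity fun x ↦ ENNReal.ofReal (∏ i, ρ i (x i)) := by
  have (i : ι) : IsFiniteMeasure ((μ i).withDensity fun x ↦ ENNReal.ofReal (ρ i x)) :=
    isFiniteMeasure_withDensity_ofReal (hρ i).2
  refine Measure.pi_eq fun s hs ↦ ?_
  have h_int (i : ι) : Integrable (ρ i) ((μ i).restrict (s i)) := (hρ i).restrict
  have h_prod : Integrable (fun x ↦ ∏ i, ρ i (x i)) (Measure.pi fun i ↦ (μ i).restrict (s i)) :=
    Integrable.fintype_prod_dep h_int
  calc (Measure.pi μ).withDensity (fun x ↦ ENNReal.ofReal (∏ i, ρ i (x i))) (Set.univ.pi s)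
      = ENNReal.ofReal (∫ x, ∏ i, ρ i (x i) ∂Measure.pi fun i ↦ (μ i).restrict (s i)) := by
        rw [withDensity_apply _ (MeasurableSet.univ_pi hs), Measure.restrict_pi_pi,
          ofReal_integral_eq_lintegral_ofReal h_prod
            (ae_of_all _ fun x ↦ Finset.prod_nonneg fun i _ ↦ hρ_nonneg i (x i))]
    _ = ∏ i, ENNReal.ofReal (∫ x in s i, ρ i x ∂μ i) := by
        rw [integral_fintype_prod_eq_prod, ENNReal.ofReal_prod_of_nonneg
          fun i _ ↦ integral_nonneg (hρ_nonneg i)]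
    _ = ∏ i, (μ i).withDensity (fun x ↦ ENNReal.ofReal (ρ i x)) (s i) :=
        Finset.prod_congr rfl fun i _ ↦ by
          rw [withDensity_apply _ (hs i),
            ofReal_integral_eq_lintegral_ofReal (h_int i) (ae_of_all _ (hρ_nonneg i))]

lemma hasDerivAt_gaussianPDFReal (m : ℝ) (v : ℝ≥0) (x : ℝ) :
    HasDerivAt (gaussianPDFReal m v) (-((x - m) / v) * gaussianPDFReal m v x) x := by
  have h_exponent : HasDerivAt (fun y ↦ -(y - m) ^ 2 / (2 * v)) (-((x - m) / v)) x := by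
    have h_sq := ((hasDerivAt_id' x).sub_const m).fun_pow 2
    refine (h_sq.fun_neg.div_const (2 * (v : ℝ))).congr_deriv ?_
    rw [mul_comm 2 (v : ℝ), ← div_div]
    ring
  rw [gaussianPDFReal_def]
  exact (h_exponent.exp.const_mul _).congr_deriv (by ring)

variable {ι : Type*} [Fintype ι]

/-- The law on `ℝ^ι` of independent Gaussian coordinates with means `m i` and variances `v i`. -/
abbrev piGaussian (m : ι → ℝ) (v : ι → ℝ≥0) : Measure (ι → ℝ) :=
  Measure.pi fun i ↦ gaussianReal (m i) (v i)

/-- The density of `piGaussian m v` with respect to Lebesgue measure, for nonzero variances. -/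
def piGaussianPDFReal (m : ι → ℝ) (v : ι → ℝ≥0) (x : ι → ℝ) : ℝ :=
  ∏ i, gaussianPDFReal (m i) (v i) (x i)

lemma hasFDerivAt_piGaussianPDFReal (m : ι → ℝ) (v : ι → ℝ≥0) (x : ι → ℝ) :
    HasFDerivAt (piGaussianPDFReal m v)
      (-piGaussianPDFReal m v x •
        ∑ i, ((x i - m i) / v i) • ContinuousLinearMap.proj (R := ℝ) (φ := fun _ ↦ ℝ) i) x := by
  classical
  have h_factor (i : ι) :=
    (hasDerivAt_gaussianPDFReal (m i) (v i) (x i)).comp_hasFDerivAt x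
      (hasFDerivAt_apply (𝕜 := ℝ) i x)
  refine (HasFDerivAt.finsetProd fun i _ ↦ h_factor i).congr_fderiv ?_
  rw [Finset.smul_sum]
  refine Finset.sum_congr rfl fun i hi ↦ ?_
  rw [piGaussianPDFReal, ← Finset.prod_erase_mul _ _ hi, smul_smul, smul_smul]
  congr 1
  simp only [Function.comp_apply]
  ring

lemma continuous_piGaussianPDFReal (m : ι → ℝ) (v : ι → ℝ≥0) :
    Continuous (piGaussianPDFReal m v) :=
  continuous_iff_continuousAt.2 fun x ↦ (hasFDerivAt_piGaussianPDFReal m v x).continuousAt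

lemma integral_piGaussian_eq_integral_mul {m : ι → ℝ} {v : ι → ℝ≥0} (hv : ∀ i, v i ≠ 0)
    (g : (ι → ℝ) → ℝ) :
    ∫ x, g x ∂piGaussian m v = ∫ x, piGaussianPDFReal m v x * g x := by
  have h_density : piGaussian m v =
      volume.withDensity fun x ↦ ENNReal.ofReal (piGaussianPDFReal m v x) := by
    simp only [piGaussian, gaussianReal_of_var_ne_zero _ (hv _)]
    exact pi_withDensity_ofReal _ (fun i ↦ gaussianPDFReal_nonneg (m i) (v i))
      fun i ↦ integrable_gaussianPDFReal (m i) (v i)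
  have h_nonneg (x : ι → ℝ) : 0 ≤ piGaussianPDFReal m v x :=
    Finset.prod_nonneg fun i _ ↦ gaussianPDFReal_nonneg (m i) (v i) (x i)
  rw [h_density, integral_withDensity_eq_integral_toReal_smul
    (continuous_piGaussianPDFReal m v).measurable.ennreal_ofReal
    (ae_of_all _ fun _ ↦ ENNReal.ofReal_lt_top)]
  simp only [ENNReal.toReal_ofReal (h_nonneg _), smul_eq_mul]

theorem integral_fderiv_piGaussian {m : ι → ℝ} {v : ι → ℝ≥0} (hv : ∀ i, v i ≠ 0)
    {u : (ι → ℝ) → ℝ} (hu : ContDiff ℝ 1 u) (hsupp : HasCompactSupport u) (w : ι → ℝ) :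
    ∫ x, fderiv ℝ u x w ∂piGaussian m v =
      ∫ x, u x * ∑ i, w i * ((x i - m i) / v i) ∂piGaussian m v := by
  have hρ_cont := continuous_piGaussianPDFReal m v
  have hρ' (x : ι → ℝ) : fderiv ℝ (piGaussianPDFReal m v) x w =
      -piGaussianPDFReal m v x * ∑ i, w i * ((x i - m i) / v i) := by
    simp [(hasFDerivAt_piGaussianPDFReal m v x).fderiv, mul_comm]
  have hu'_cont : Continuous fun x ↦ fderiv ℝ u x w :=
    (hu.continuous_fderiv one_ne_zero).clm_apply continuous_const
  have hρ'_cont : Continuous fun x ↦ fderiv ℝ (piGaussianPDFReal m v) x w := by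
    simp only [hρ']
    fun_prop
  have h_parts := integral_mul_fderiv_eq_neg_fderiv_mul_of_integrable (μ := volume) (v := w)
    ((hρ'_cont.mul hu.continuous).integrable_of_hasCompactSupport hsupp.mul_left)
    ((hρ_cont.mul hu'_cont).integrable_of_hasCompactSupport (hsupp.fderiv_apply ℝ w).mul_left)
    ((hρ_cont.mul hu.continuous).integrable_of_hasCompactSupport hsupp.mul_left)
    (fun x _ ↦ (hasFDerivAt_piGaussianPDFReal m v x).differentiableAt)
    (fun x _ ↦ hu.differentiable one_ne_zero x)
  rw [integral_piGaussian_eq_integral_mul hv, integral_piGaussian_eq_integral_mul hv, h_parts,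
    ← integral_neg]
  refine integral_congr_ae (ae_of_all _ fun x ↦ ?_)
  simp only [hρ']
  ring

end ProductGaussian

section OrnsteinUhlenbeck

open Matrix

variable {ι : Type*} [Fintype ι]

/-- The Ornstein–Uhlenbeck operator `∂_w² + (c - w · φ) ∂_w` acting along the direction `w`. The
reservoirs and the bonds of the Ginzburg–Landau dynamics both contribute operators of this form. -/
def ouOperator (c : ℝ) (w : ι → ℝ) (f : (ι → ℝ) → ℝ) (φ : ι → ℝ) : ℝ :=
  fderiv ℝ (fun χ ↦ fderiv ℝ f χ w) φ w + (c - w ⬝ᵥ φ) * fderiv ℝ f φ w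

variable {f : (ι → ℝ) → ℝ}

lemma contDiff_fderiv_apply (hf : ContDiff ℝ 2 f) (w : ι → ℝ) :
    ContDiff ℝ 1 fun φ ↦ fderiv ℝ f φ w :=
  (hf.fderiv_right (m := 1) (by norm_num)).clm_apply contDiff_const

lemma continuous_fderiv_fderiv_apply (hf : ContDiff ℝ 2 f) (w : ι → ℝ) :
    Continuous fun φ ↦ fderiv ℝ (fun χ ↦ fderiv ℝ f χ w) φ w :=
  ((contDiff_fderiv_apply hf w).continuous_fderiv one_ne_zero).clm_apply continuous_const

lemma integrable_mul_ouOperator (μ : Measure (ι → ℝ)) [IsFiniteMeasureOnCompacts μ]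
    (hf : ContDiff ℝ 2 f) (hsupp : HasCompactSupport f) (c : ℝ) (w : ι → ℝ) :
    Integrable (fun φ ↦ f φ * ouOperator c w f φ) μ := by
  refine Continuous.integrable_of_hasCompactSupport (hf.continuous.mul ?_) hsupp.mul_right
  have h_drift_cont : Continuous fun φ ↦ c - w ⬝ᵥ φ := by
    unfold dotProduct
    fun_prop
  exact (continuous_fderiv_fderiv_apply hf w).add
    (h_drift_cont.mul (contDiff_fderiv_apply hf w).continuous)

lemma integral_mul_fderiv_fderiv_piGaussian (m : ι → ℝ) (hf : ContDiff ℝ 2 f)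
    (hsupp : HasCompactSupport f) (w : ι → ℝ) :
    ∫ φ, f φ * fderiv ℝ (fun χ ↦ fderiv ℝ f χ w) φ w ∂piGaussian m 1 =
      ∫ φ, f φ * fderiv ℝ f φ w * (w ⬝ᵥ (φ - m)) ∂piGaussian m 1 -
        ∫ φ, fderiv ℝ f φ w ^ 2 ∂piGaussian m 1 := by
  have hf' := contDiff_fderiv_apply hf w
  have h_leibniz (φ : ι → ℝ) : fderiv ℝ (fun χ ↦ f χ * fderiv ℝ f χ w) φ w =
      f φ * fderiv ℝ (fun χ ↦ fderiv ℝ f χ w) φ w + fderiv ℝ f φ w ^ 2 := by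
    rw [fderiv_fun_mul (hf.differentiable two_ne_zero φ) (hf'.differentiable one_ne_zero φ)]
    simp [sq]
  have h_parts : ∫ φ, fderiv ℝ (fun χ ↦ f χ * fderiv ℝ f χ w) φ w ∂piGaussian m 1 =
      ∫ φ, f φ * fderiv ℝ f φ w * (w ⬝ᵥ (φ - m)) ∂piGaussian m 1 := by
    simpa [dotProduct] using integral_fderiv_piGaussian (m := m) (v := 1) (fun _ ↦ one_ne_zero)
      ((hf.of_le one_le_two).mul hf') hsupp.mul_right w
  have h_second_int : Integrable (fun φ ↦ f φ * fderiv ℝ (fun χ ↦ fderiv ℝ f χ w) φ w)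
      (piGaussian m 1) :=
    (hf.continuous.mul (continuous_fderiv_fderiv_apply hf w)).integrable_of_hasCompactSupport
      hsupp.mul_right
  have h_sq_int : Integrable (fun φ ↦ fderiv ℝ f φ w ^ 2) (piGaussian m 1) := by
    simp only [sq]
    exact (hf'.continuous.mul hf'.continuous).integrable_of_hasCompactSupport
      (hsupp.fderiv_apply ℝ w).mul_right
  rw [← h_parts, eq_sub_iff_add_eq, ← integral_add h_second_int h_sq_int]
  simp only [h_leibniz]

theorem integral_mul_ouOperator (m : ι → ℝ) (hf : ContDiff ℝ 2 f) (hsupp : HasCompactSupport f)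
    (c : ℝ) (w : ι → ℝ) :
    ∫ φ, f φ * ouOperator c w f φ ∂piGaussian m 1 =
      (c - w ⬝ᵥ m) * ∫ φ, f φ * fderiv ℝ f φ w ∂piGaussian m 1 -
        ∫ φ, fderiv ℝ f φ w ^ 2 ∂piGaussian m 1 := by
  have hff'_cont : Continuous fun φ ↦ f φ * fderiv ℝ f φ w :=
    hf.continuous.mul (contDiff_fderiv_apply hf w).continuous
  have hff'_int : Integrable (fun φ ↦ f φ * fderiv ℝ f φ w) (piGaussian m 1) :=
    hff'_cont.integrable_of_hasCompactSupport hsupp.mul_right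
  have h_drift_int : Integrable (fun φ ↦ f φ * fderiv ℝ f φ w * (w ⬝ᵥ (φ - m)))
      (piGaussian m 1) := by
    refine Continuous.integrable_of_hasCompactSupport (hff'_cont.mul ?_) hsupp.mul_right.mul_right
    unfold dotProduct
    fun_prop
  have h_split (φ : ι → ℝ) : f φ * fderiv ℝ (fun χ ↦ fderiv ℝ f χ w) φ w =
      f φ * ouOperator c w f φ - (c - w ⬝ᵥ m) * (f φ * fderiv ℝ f φ w) +
        f φ * fderiv ℝ f φ w * (w ⬝ᵥ (φ - m)) := by
    rw [ouOperator, dotProduct_sub]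
    ring
  have h_green := integral_mul_fderiv_fderiv_piGaussian m hf hsupp w
  have h_ou_int := integrable_mul_ouOperator (piGaussian m 1) hf hsupp c w
  have h_diff_int : Integrable (fun φ ↦ f φ * ouOperator c w f φ -
      (c - w ⬝ᵥ m) * (f φ * fderiv ℝ f φ w)) (piGaussian m 1) :=
    h_ou_int.sub (hff'_int.const_mul _)
  simp only [h_split] at h_green
  rw [integral_add h_diff_int h_drift_int,
    integral_sub h_ou_int (hff'_int.const_mul _), integral_const_mul] at h_green
  linear_combination h_green

end OrnsteinUhlenbeck

section Network

open Matrix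

variable {ι κ : Type*} [Fintype ι]

lemma half_sum_sum_mul_sub_mul_sub {p : ι → ι → ℝ} (hp : ∀ x y, p x y = p y x) (a b : ι → ℝ) :
    1 / 2 * ∑ x, ∑ y, p x y * ((a y - a x) * (b y - b x)) =
      -∑ x, (∑ y, p x y * (a y - a x)) * b x := by
  have h_swap : ∑ x, ∑ y, p x y * ((a y - a x) * b y) =
      -∑ x, (∑ y, p x y * (a y - a x)) * b x := by
    rw [Finset.sum_comm]
    simp only [Finset.sum_mul, ← Finset.sum_neg_distrib]
    refine Finset.sum_congr rfl fun x _ ↦ Finset.sum_congr rfl fun y _ ↦ ?_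
    rw [hp y x]
    ring
  have h_expand : ∑ x, ∑ y, p x y * ((a y - a x) * (b y - b x)) =
      ∑ x, ∑ y, p x y * ((a y - a x) * b y) - ∑ x, (∑ y, p x y * (a y - a x)) * b x := by
    simp only [Finset.sum_mul, ← Finset.sum_sub_distrib]
    refine Finset.sum_congr rfl fun x _ ↦ Finset.sum_congr rfl fun y _ ↦ ?_
    ring
  rw [h_expand, h_swap]
  ring

variable [Fintype κ] [DecidableEq ι]

/-- The Ginzburg–Landau generator on a finite set `ι` of sites, with an exchange of rate `p x y`
across the bond `(x, y)` and, for each `k : κ`, a reservoir of level `Φ k` attached to the site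
`s k`. Several reservoirs may share a site. -/
def networkGenerator (p : ι → ι → ℝ) (s : κ → ι) (Φ : κ → ℝ) (f : (ι → ℝ) → ℝ) (φ : ι → ℝ) : ℝ :=
  ∑ k, ouOperator (Φ k) (Pi.single (s k) 1) f φ +
    1 / 2 * ∑ x, ∑ y, p x y * ouOperator 0 (Pi.single y 1 - Pi.single x 1) f φ

/-- The Dirichlet form of `networkGenerator p s Φ` at `f`, with respect to the measure `μ`. It does
not depend on the levels `Φ` of the reservoirs. -/
def networkDirichletForm (p : ι → ι → ℝ) (s : κ → ι) (μ : Measure (ι → ℝ)) (f : (ι → ℝ) → ℝ) : ℝ :=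
  ∑ k, ∫ φ, fderiv ℝ f φ (Pi.single (s k) 1) ^ 2 ∂μ +
    1 / 2 * ∑ x, ∑ y, p x y * ∫ φ, fderiv ℝ f φ (Pi.single y 1 - Pi.single x 1) ^ 2 ∂μ

/-- The stationary equation, at every site, for the mean profile `m` of the dynamics generated by
`networkGenerator p s Φ`. -/
def IsNetworkProfile (p : ι → ι → ℝ) (s : κ → ι) (Φ : κ → ℝ) (m : ι → ℝ) : Prop :=
  ∀ x, ∑ y, p x y * (m y - m x) + ∑ k, (if s k = x then Φ k - m x else 0) = 0

variable {p : ι → ι → ℝ} {s : κ → ι} {Φ : κ → ℝ} {m : ι → ℝ} {f : (ι → ℝ) → ℝ}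

lemma IsNetworkProfile.sum_reservoirs_eq (hm : IsNetworkProfile p s Φ m)
    (hp : ∀ x y, p x y = p y x) (b : ι → ℝ) :
    ∑ k, (Φ k - m (s k)) * b (s k) =
      1 / 2 * ∑ x, ∑ y, p x y * ((m y - m x) * (b y - b x)) := by
  calc ∑ k, (Φ k - m (s k)) * b (s k)
      = ∑ x, (∑ k, if s k = x then Φ k - m x else 0) * b x := by
        simp only [Finset.sum_mul, ite_mul, zero_mul]
        rw [Finset.sum_comm]
        simp
    _ = -∑ x, (∑ y, p x y * (m y - m x)) * b x := by
        rw [← Finset.sum_neg_distrib]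
        exact Finset.sum_congr rfl fun x _ ↦ by linear_combination b x * hm x
    _ = 1 / 2 * ∑ x, ∑ y, p x y * ((m y - m x) * (b y - b x)) :=
        (half_sum_sum_mul_sub_mul_sub hp m b).symm

lemma integral_mul_networkGenerator (m : ι → ℝ) (hf : ContDiff ℝ 2 f)
    (hsupp : HasCompactSupport f) :
    ∫ φ, f φ * networkGenerator p s Φ f φ ∂piGaussian m 1 =
      ∑ k, ∫ φ, f φ * ouOperator (Φ k) (Pi.single (s k) 1) f φ ∂piGaussian m 1 +
        1 / 2 * ∑ x, ∑ y, p x y *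
          ∫ φ, f φ * ouOperator 0 (Pi.single y 1 - Pi.single x 1) f φ ∂piGaussian m 1 := by
  have h_int (c : ℝ) (w : ι → ℝ) := integrable_mul_ouOperator (piGaussian m 1) hf hsupp c w
  simp only [networkGenerator, mul_add, Finset.mul_sum, mul_left_comm (f _)]
  rw [integral_add (integrable_finsetSum _ fun k _ ↦ h_int _ _)
      (integrable_finsetSum _ fun x _ ↦ integrable_finsetSum _ fun y _ ↦
        ((h_int _ _).const_mul _).const_mul _),
    integral_finsetSum _ fun k _ ↦ h_int _ _,
    integral_finsetSum _ fun x _ ↦ integrable_finsetSum _ fun y _ ↦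
      ((h_int _ _).const_mul _).const_mul _]
  congr 1
  refine Finset.sum_congr rfl fun x _ ↦ ?_
  rw [integral_finsetSum _ fun y _ ↦ ((h_int _ _).const_mul _).const_mul _]
  simp only [integral_const_mul]

theorem dirichlet_form_identity_general (hp : ∀ x y, p x y = p y x)
    (hm : IsNetworkProfile p s Φ m) (hf : ContDiff ℝ 2 f) (hsupp : HasCompactSupport f) :
    ∫ φ, f φ * -networkGenerator p s Φ f φ ∂piGaussian m 1 =
      networkDirichletForm p s (piGaussian m 1) f := by
  set F : ι → ℝ := fun x ↦ ∫ φ, f φ * fderiv ℝ f φ (Pi.single x 1) ∂piGaussian m 1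
  have hF (x y : ι) : ∫ φ, f φ * fderiv ℝ f φ (Pi.single y 1 - Pi.single x 1) ∂piGaussian m 1 =
      F y - F x := by
    have h_int (z : ι) : Integrable (fun φ ↦ f φ * fderiv ℝ f φ (Pi.single z 1))
        (piGaussian m 1) :=
      (hf.continuous.mul (contDiff_fderiv_apply hf _).continuous).integrable_of_hasCompactSupport
        hsupp.mul_right
    simp only [map_sub, mul_sub]
    exact integral_sub (h_int y) (h_int x)
  have h_bond (x y : ι) : (0 - (Pi.single y 1 - Pi.single x 1) ⬝ᵥ m) * (F y - F x) =
      -((m y - m x) * (F y - F x)) := by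
    rw [sub_dotProduct, single_one_dotProduct, single_one_dotProduct]
    ring
  have h_stationary := hm.sum_reservoirs_eq hp F
  simp only [networkDirichletForm, mul_neg, integral_neg, integral_mul_networkGenerator m hf hsupp,
    integral_mul_ouOperator m hf hsupp, hF, h_bond, single_one_dotProduct, mul_sub (p _ _),
    Finset.sum_sub_distrib, Finset.sum_neg_distrib]
  linear_combination -h_stationary

end Network

section Lattice

open Matrix

variable {n : ℕ}

/-- The bulk exchange rates of `GLgen`, as a kernel on the sites of `Λ_n`. -/
def latticeRate (γ : ℝ) (x y : Lam n) : ℝ := pker γ ((y : ℕ) - (x : ℕ))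

/-- The sites `1` and `n - 1` of `Λ_n` carrying the left and right reservoirs; they coincide
when `n = 2`. -/
def latticeEnds (hn : 2 ≤ n) : Fin 2 → Lam n :=
  ![⟨1, Finset.mem_Icc.2 (by lia)⟩, ⟨n - 1, Finset.mem_Icc.2 (by lia)⟩]

lemma latticeRate_comm (γ : ℝ) (x y : Lam n) : latticeRate γ x y = latticeRate γ y x := by
  simp only [latticeRate, pker, abs_sub_comm ((y : ℕ) : ℝ), sub_eq_zero, eq_comm]

lemma IsDiscreteProfile.isNetworkProfile {γ Φl Φr : ℝ} {ψ : ℕ → ℝ}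
    (hψ : IsDiscreteProfile γ Φl Φr n ψ) (hn : 2 ≤ n) :
    IsNetworkProfile (latticeRate γ) (latticeEnds hn) ![Φl, Φr] fun x ↦ ψ x := by
  intro x
  refine Eq.trans ?_ (hψ x x.2)
  rw [← Finset.sum_coe_sort (Lam n), Fin.sum_univ_two, ← add_assoc]
  simp only [latticeRate, latticeEnds, Fin.isValue, cons_val_zero, cons_val_one, Subtype.ext_iff,
    eq_comm (b := (x : ℕ))]
  grind

lemma coordN_eq_apply {k : ℕ} (hk : k ∈ Lam n) (φ : Conf n) : coordN n k φ = φ ⟨k, hk⟩ :=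
  dif_pos hk

lemma pdN_eq_fderiv {k : ℕ} (hk : k ∈ Lam n) {f : Conf n → ℝ} (hf : Differentiable ℝ f) :
    pdN n k f = fun φ ↦ fderiv ℝ f φ (Pi.single ⟨k, hk⟩ 1) := by
  funext φ
  have h_update := hasDerivAt_update φ ⟨k, hk⟩ (φ ⟨k, hk⟩)
  rw [pdN, dif_pos hk]
  refine HasDerivAt.deriv (HasFDerivAt.comp_hasDerivAt _ ?_ h_update)
  rw [Function.update_eq_self]
  exact (hf φ).hasFDerivAt

variable {f : Conf n → ℝ}

lemma pdN_pdN_eq_fderiv {j k : ℕ} (hj : j ∈ Lam n) (hk : k ∈ Lam n) (hf : ContDiff ℝ 2 f) :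
    pdN n j (pdN n k f) = fun φ ↦
      fderiv ℝ (fun χ ↦ fderiv ℝ f χ (Pi.single ⟨k, hk⟩ 1)) φ (Pi.single ⟨j, hj⟩ 1) := by
  rw [pdN_eq_fderiv hk (hf.differentiable two_ne_zero),
    pdN_eq_fderiv hj ((contDiff_fderiv_apply hf _).differentiable one_ne_zero)]

lemma ouOperator_single_eq_pdN (hf : ContDiff ℝ 2 f) {k : ℕ} (hk : k ∈ Lam n) (c : ℝ)
    (φ : Conf n) :
    ouOperator c (Pi.single ⟨k, hk⟩ 1) f φ =
      pdN n k (pdN n k f) φ + (c - coordN n k φ) * pdN n k f φ := by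
  rw [ouOperator, single_one_dotProduct, pdN_pdN_eq_fderiv hk hk hf,
    pdN_eq_fderiv hk (hf.differentiable two_ne_zero), coordN_eq_apply hk]

lemma ouOperator_single_sub_single_eq_pdN (hf : ContDiff ℝ 2 f) (x y : Lam n) (φ : Conf n) :
    ouOperator 0 (Pi.single y 1 - Pi.single x 1) f φ =
      (coordN n x φ - coordN n y φ) * (pdN n y f φ - pdN n x f φ) +
        (pdN n y (pdN n y f) φ - pdN n y (pdN n x f) φ - pdN n x (pdN n y f) φ +
          pdN n x (pdN n x f) φ) := by
  have hf' (z : Lam n) : DifferentiableAt ℝ (fun χ ↦ fderiv ℝ f χ (Pi.single z 1)) φ :=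
    (contDiff_fderiv_apply hf _).differentiable one_ne_zero φ
  rw [pdN_pdN_eq_fderiv x.2 x.2 hf, pdN_pdN_eq_fderiv x.2 y.2 hf, pdN_pdN_eq_fderiv y.2 x.2 hf,
    pdN_pdN_eq_fderiv y.2 y.2 hf, pdN_eq_fderiv x.2 (hf.differentiable two_ne_zero),
    pdN_eq_fderiv y.2 (hf.differentiable two_ne_zero), coordN_eq_apply x.2, coordN_eq_apply y.2]
  simp only [ouOperator, sub_dotProduct, single_one_dotProduct, map_sub,
    fderiv_fun_sub (hf' y) (hf' x), _root_.sub_apply]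
  ring

lemma GLgen_eq_networkGenerator (γ Φl Φr : ℝ) (hn : 2 ≤ n) (hf : ContDiff ℝ 2 f) (φ : Conf n) :
    GLgen γ Φl Φr n f φ =
      (n : ℝ) ^ γ * networkGenerator (latticeRate γ) (latticeEnds hn) ![Φl, Φr] f φ := by
  simp only [GLgen, GLleft, GLright, GLbulk, networkGenerator, Fin.sum_univ_two, latticeEnds,
    latticeRate, cons_val_zero, cons_val_one, ouOperator_single_eq_pdN hf,
    ouOperator_single_sub_single_eq_pdN hf, ← Finset.sum_coe_sort (Lam n)]

lemma integral_mul_neg_GLgen (γ Φl Φr : ℝ) (hn : 2 ≤ n) (μ : Measure (Conf n))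
    (hf : ContDiff ℝ 2 f) :
    ∫ φ, f φ * -GLgen γ Φl Φr n f φ ∂μ = (n : ℝ) ^ γ *
      ∫ φ, f φ * -networkGenerator (latticeRate γ) (latticeEnds hn) ![Φl, Φr] f φ ∂μ := by
  simp only [GLgen_eq_networkGenerator γ Φl Φr hn hf, ← mul_neg, mul_left_comm (f _),
    integral_const_mul]

lemma networkDirichletForm_lattice (γ : ℝ) (hn : 2 ≤ n) (μ : Measure (Conf n))
    (hf : Differentiable ℝ f) :
    networkDirichletForm (latticeRate γ) (latticeEnds hn) μ f =
      ∫ φ, pdN n 1 f φ ^ 2 ∂μ + ∫ φ, pdN n (n - 1) f φ ^ 2 ∂μ +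
        1 / 2 * ∑ x ∈ Lam n, ∑ y ∈ Lam n, pker γ ((y : ℝ) - (x : ℝ)) *
          ∫ φ, (pdN n y f φ - pdN n x f φ) ^ 2 ∂μ := by
  have h_coe (x : Lam n) : pdN n x f = fun φ ↦ fderiv ℝ f φ (Pi.single x 1) :=
    pdN_eq_fderiv x.2 hf
  have h_left : pdN n 1 f = fun φ ↦ fderiv ℝ f φ (Pi.single (latticeEnds hn 0) 1) :=
    h_coe (latticeEnds hn 0)
  have h_right : pdN n (n - 1) f = fun φ ↦ fderiv ℝ f φ (Pi.single (latticeEnds hn 1) 1) :=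
    h_coe (latticeEnds hn 1)
  simp only [networkDirichletForm, Fin.sum_univ_two, latticeRate, h_left, h_right, h_coe, map_sub,
    ← Finset.sum_coe_sort (Lam n)]

end Lattice

/-- Explicit computation of the Dirichlet form of the boundary-driven
long-range Ginzburg–Landau generator with respect to its non-equilibrium steady state. -/
theorem dirichlet_form_identity
    (γ Φl Φr : ℝ) (hγ : γ ∈ Set.Ioo (1:ℝ) 2)
    (n : ℕ) (hn : 2 ≤ n)
    (ψ : ℕ → ℝ) (hψ : IsDiscreteProfile γ Φl Φr n ψ)
    (f : Conf n → ℝ) (hf : ContDiff ℝ (⊤ : ℕ∞) f) (hsupp : HasCompactSupport f) :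
    ∫ φ, f φ * (-(GLgen γ Φl Φr n f φ)) ∂(gaussianProduct n ψ)
      = (n : ℝ) ^ γ * ((∫ φ, (pdN n 1 f φ) ^ 2 ∂(gaussianProduct n ψ))
          + (∫ φ, (pdN n (n - 1) f φ) ^ 2 ∂(gaussianProduct n ψ))
          + (1/2) * ∑ x ∈ Lam n, ∑ y ∈ Lam n, pker γ ((y : ℝ) - (x : ℝ)) *
              ∫ φ, (pdN n y f φ - pdN n x f φ) ^ 2 ∂(gaussianProduct n ψ)) := by
  have hf2 : ContDiff ℝ 2 f := contDiff_infty.1 hf 2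
  rw [integral_mul_neg_GLgen γ Φl Φr hn _ hf2,
    ← networkDirichletForm_lattice γ hn _ (hf2.differentiable two_ne_zero)]
  exact congrArg _ (dirichlet_form_identity_general (latticeRate_comm γ)
    (hψ.isNetworkProfile hn) hf2 hsupp)
end
end

section
/- Fix γ ∈ (1,2) and Φ_ℓ, Φ_r ∈ ℝ. There exists a constant C > 0 depending only on γ such that for every integer n ≥ 2 and every smooth compactly supported f : ℝ^{Λ_n} → ℝ, Var_{μ_ss^n}(f) ≤ C n² ∫ f (−𝓛_n f) dμ_ss^n, where Var_{μ_ss^n}(f) = ∫ f² dμ_ss^n − (∫ f dμ_ss^n)². -/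
open MeasureTheory Filter ENNReal NNReal

noncomputable section

/-!
If `X`, `Y` are independent copies of a centred Gaussian vector, the law of `(X, Y)` is invariant
under the rotations `(x, y) ↦ (x cos t + y sin t, -x sin t + y cos t)`. Differentiating this
invariance in `t` yields Gaussian integration by parts, and following `𝔼[f(X) f(X cos t + Y sin t)]`
from `t = 0` to `t = π/2` yields the Poincaré inequality `Var f ≤ 𝔼 |∇f|²` for the covariance norm.

The equation of the profile `ψ` says exactly that `𝓛_n` is `n^γ` times an Ornstein-Uhlenbeck
operator `tr (A ∇²f) - ⟨A (φ - ψ), ∇f⟩`, where `A` is the Laplacian of the kernel `p` plus the unit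
reservoir rates at the two ends. Integration by parts makes its Dirichlet form `n^γ ∫ ⟨∇f, A ∇f⟩`,
whatever the values of the reservoirs. Keeping in `A` only the nearest-neighbour jumps and the
reservoirs, the discrete Poincaré inequality on an interval bounds `A` below by a multiple of
`n^(-2)`.
-/

local notation "ℛ" => ContinuousLinearMap.rotation

section Rotation

theorem memLp_comp_of_lipschitzWith {Ω E F : Type*} [MeasurableSpace Ω] [NormedAddCommGroup E]
    [NormedAddCommGroup F] {ν : Measure Ω} [IsFiniteMeasure ν] {p : ℝ≥0∞} {K : ℝ≥0} {h : E → F}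
    {X : Ω → E} (hh : LipschitzWith K h) (hX : MemLp X p ν) : MemLp (fun ω ↦ h (X ω)) p ν := by
  have hsub : LipschitzWith K fun x ↦ h x - h 0 :=
    .of_dist_le_mul fun x y ↦ by simpa using hh.dist_le_mul x y
  simpa [Function.comp_def, Pi.add_def] using
    (hsub.comp_memLp (sub_self _) hX).add (memLp_const (h 0))

variable {E : Type*} [NormedAddCommGroup E] [NormedSpace ℝ E]

theorem hasDerivAt_rotation_fst (z : E × E) (θ : ℝ) :
    HasDerivAt (fun t ↦ (ℛ t z).1) (ℛ θ z).2 θ := by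
  simpa only [ContinuousLinearMap.rotation_apply] using
    ((Real.hasDerivAt_cos θ).smul_const z.1).fun_add ((Real.hasDerivAt_sin θ).smul_const z.2)

theorem rotation_neg_rotation (θ : ℝ) (z : E × E) : ℛ (-θ) (ℛ θ z) = z := by
  have h := Real.cos_sq_add_sin_sq θ
  ext <;> simp only [ContinuousLinearMap.rotation_apply, Real.cos_neg, Real.sin_neg] <;>
    match_scalars <;> linarith

theorem norm_rotation_le (θ : ℝ) (z : E × E) : ‖ℛ θ z‖ ≤ 2 * ‖z‖ := by
  have hscal {a b : ℝ} (ha : |a| ≤ 1) (hb : |b| ≤ 1) : ‖a • z.1 + b • z.2‖ ≤ 2 * ‖z‖ := by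
    calc ‖a • z.1 + b • z.2‖ ≤ |a| * ‖z.1‖ + |b| * ‖z.2‖ := by
          simpa only [norm_smul, Real.norm_eq_abs] using norm_add_le (a • z.1) (b • z.2)
      _ ≤ 1 * ‖z‖ + 1 * ‖z‖ := by gcongr; exacts [norm_fst_le z, norm_snd_le z]
      _ = 2 * ‖z‖ := by ring
  rw [ContinuousLinearMap.rotation_apply]
  exact max_le (hscal (Real.abs_cos_le_one θ) (Real.abs_sin_le_one θ))
    (hscal (by simpa using Real.abs_sin_le_one θ) (Real.abs_cos_le_one θ))

variable {h : E → ℝ} {K : ℝ≥0}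

theorem abs_fderiv_apply_le (hK : LipschitzWith K h) (x v : E) : |fderiv ℝ h x v| ≤ K * ‖v‖ :=
  (fderiv ℝ h x).le_of_opNorm_le (norm_fderiv_le_of_lipschitz ℝ hK) v

theorem abs_fderiv_rotation_le (hK : LipschitzWith K h) (θ : ℝ) (z : E × E) :
    |fderiv ℝ h (ℛ θ z).1 (ℛ θ z).2| ≤ K * 2 * ‖z‖ := by
  calc |fderiv ℝ h (ℛ θ z).1 (ℛ θ z).2| ≤ K * ‖(ℛ θ z).2‖ := abs_fderiv_apply_le hK _ _
    _ ≤ K * (2 * ‖z‖) := by gcongr; exact (norm_snd_le _).trans (norm_rotation_le θ z)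
    _ = K * 2 * ‖z‖ := by ring

variable [MeasurableSpace E] [BorelSpace E] [SecondCountableTopology E]

theorem memLp_fderiv_rotation {ν : Measure (E × E)} {p : ℝ≥0∞} (hν : MemLp id p ν)
    (hh : ContDiff ℝ 1 h) (hK : LipschitzWith K h) (θ : ℝ) :
    MemLp (fun z ↦ fderiv ℝ h (ℛ θ z).1 (ℛ θ z).2) p ν := by
  have hcont : Continuous fun z ↦ fderiv ℝ h (ℛ θ z).1 (ℛ θ z).2 := by
    have := hh.continuous_fderiv one_ne_zero
    fun_prop
  exact hν.of_le_mul hcont.aestronglyMeasurable (ae_of_all _ (abs_fderiv_rotation_le hK θ))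

theorem hasDerivAt_integral_mul_comp_rotation {ν : Measure (E × E)} [IsFiniteMeasure ν]
    (hν : MemLp id 2 ν) {w : E × E → ℝ} (hw : MemLp w 2 ν) (hh : ContDiff ℝ 1 h)
    (hK : LipschitzWith K h) (θ : ℝ) :
    HasDerivAt (fun t ↦ ∫ z, w z * h (ℛ t z).1 ∂ν)
      (∫ z, w z * fderiv ℝ h (ℛ θ z).1 (ℛ θ z).2 ∂ν) θ := by
  have hcomp (t : ℝ) : MemLp (fun z ↦ h (ℛ t z).1) 2 ν :=
    memLp_comp_of_lipschitzWith hK ((ContinuousLinearMap.fst ℝ E E ∘L ℛ t).comp_memLp' hν)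
  refine (hasDerivAt_integral_of_dominated_loc_of_deriv_le (s := Set.univ)
    (F' := fun t z ↦ w z * fderiv ℝ h (ℛ t z).1 (ℛ t z).2)
    (bound := fun z ↦ ‖w z‖ * (K * 2 * ‖z‖)) univ_mem
    (.of_forall fun t ↦ (hw.integrable_mul (hcomp t)).aestronglyMeasurable)
    (hw.integrable_mul (hcomp θ))
    (hw.integrable_mul (memLp_fderiv_rotation hν hh hK θ)).aestronglyMeasurable
    (ae_of_all _ fun z t _ ↦ ?_) (hw.norm.integrable_mul (hν.norm.const_mul (K * 2)))
    (ae_of_all _ fun z t _ ↦ ?_)).2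
  · rw [norm_mul]
    gcongr
    exact abs_fderiv_rotation_le hK t z
  · exact ((hh.differentiable one_ne_zero _).hasFDerivAt.comp_hasDerivAt t
      (hasDerivAt_rotation_fst z t)).const_mul (w z)

end Rotation

section Gaussian

open ProbabilityTheory

variable {E : Type*} [NormedAddCommGroup E] [NormedSpace ℝ E] [MeasurableSpace E] [BorelSpace E]
  {μ : Measure E}

theorem integrable_covarianceBilinDual_fderiv {Ω : Type*} [TopologicalSpace Ω] [MeasurableSpace Ω]
    [OpensMeasurableSpace Ω] {ν : Measure Ω} [IsFiniteMeasure ν] {f : E → ℝ} {K : ℝ≥0}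
    (hf : ContDiff ℝ 1 f) (hK : LipschitzWith K f) {X Y : Ω → E} (hX : Continuous X)
    (hY : Continuous Y) :
    Integrable (fun ω ↦ covarianceBilinDual μ (fderiv ℝ f (X ω)) (fderiv ℝ f (Y ω))) ν := by
  have hf' := hf.continuous_fderiv one_ne_zero
  refine .of_bound (((covarianceBilinDual μ).continuous.comp (hf'.comp hX)).clm_apply
    (hf'.comp hY)).aestronglyMeasurable (K * K * ∫ x, ‖x‖ ^ 2 ∂μ.map (fun x ↦ x - ∫ y, y ∂μ))
    (ae_of_all _ fun ω ↦ (norm_uncenteredCovarianceBilinDual_le _ _).trans ?_)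
  gcongr <;> exact norm_fderiv_le_of_lipschitz ℝ hK

variable [CompleteSpace E] [SecondCountableTopology E] [IsGaussian μ]

theorem integral_mul_comp_rotation (hμ : μ[id] = 0) {v w : E × E → ℝ} (hv : Continuous v)
    (hw : Continuous w) (θ : ℝ) :
    ∫ z, v z * w (ℛ θ z) ∂(μ.prod μ) = ∫ z, v (ℛ (-θ) z) * w z ∂(μ.prod μ) := by
  have hcont : Continuous fun z ↦ v (ℛ (-θ) z) * w z := by fun_prop
  conv_rhs => rw [← IsGaussian.map_rotation_eq_self hμ θ,
    integral_map (by fun_prop) hcont.aestronglyMeasurable]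
  simp only [rotation_neg_rotation]

theorem integral_dual_of_centered (hμ : μ[id] = 0) (L : StrongDual ℝ E) : ∫ x, L x ∂μ = 0 := by
  rw [IsGaussian.integral_dual, show ∫ x, x ∂μ = 0 from hμ, map_zero]

theorem covarianceBilinDual_apply_of_centered (hμ : μ[id] = 0) (L M : StrongDual ℝ E) :
    covarianceBilinDual μ L M = ∫ x, L x * M x ∂μ := by
  simp [covarianceBilinDual_apply IsGaussian.memLp_two_id, integral_dual_of_centered hμ]

theorem integral_dual_snd_mul_comp_rotation (hμ : μ[id] = 0) (L : StrongDual ℝ E) {h : E → ℝ}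
    (hh : Continuous h) (hh2 : MemLp h 2 μ) (t : ℝ) :
    ∫ z, L z.2 * h (ℛ t z).1 ∂(μ.prod μ) = Real.sin t * ∫ x, L x * h x ∂μ := by
  have hL : MemLp L 2 μ := L.comp_memLp' IsGaussian.memLp_two_id
  have hi₁ : Integrable (fun z : E × E ↦ L z.1 * h z.1) (μ.prod μ) :=
    (hL.integrable_mul hh2).comp_fst μ
  have hi₂ : Integrable (fun z : E × E ↦ h z.1 * L z.2) (μ.prod μ) :=
    (hh2.integrable one_le_two).mul_prod (hL.integrable one_le_two)
  calc ∫ z, L z.2 * h (ℛ t z).1 ∂(μ.prod μ)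
      = ∫ z, L (ℛ (-t) z).2 * h z.1 ∂(μ.prod μ) :=
        integral_mul_comp_rotation hμ (v := fun z ↦ L z.2) (w := fun z ↦ h z.1) (by fun_prop)
          (by fun_prop) t
    _ = ∫ z, Real.sin t * (L z.1 * h z.1) + Real.cos t * (h z.1 * L z.2) ∂(μ.prod μ) := by
        congr with z
        simp only [ContinuousLinearMap.rotation_apply, Real.sin_neg, Real.cos_neg, neg_neg,
          map_add, map_smul, smul_eq_mul]
        ring
    _ = Real.sin t * ∫ x, L x * h x ∂μ := by
        rw [integral_add (hi₁.const_mul _) (hi₂.const_mul _), integral_const_mul,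
          integral_const_mul, integral_prod_mul, integral_dual_of_centered hμ,
          integral_fun_fst (fun x ↦ L x * h x)]
        simp

/-- Differentiate the rotation invariance at angle `0`. -/
theorem integral_dual_mul_of_centered (hμ : μ[id] = 0) (L : StrongDual ℝ E) {h : E → ℝ} {K : ℝ≥0}
    (hh : ContDiff ℝ 1 h) (hK : LipschitzWith K h) :
    ∫ x, L x * h x ∂μ = ∫ x, covarianceBilinDual μ L (fderiv ℝ h x) ∂μ := by
  have hid : MemLp id 2 μ := IsGaussian.memLp_two_id
  have hL : MemLp L 2 μ := L.comp_memLp' hid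
  have hh2 : MemLp h 2 μ := memLp_comp_of_lipschitzWith hK hid
  have hrot := hasDerivAt_integral_mul_comp_rotation IsGaussian.memLp_two_id (hL.comp_snd μ) hh hK 0
  have hsin := (Real.hasDerivAt_sin 0).mul_const (∫ x, L x * h x ∂μ)
  simp only [integral_dual_snd_mul_comp_rotation hμ L hh.continuous hh2] at hrot
  have hint : Integrable (fun z : E × E ↦ L z.2 * fderiv ℝ h z.1 z.2) (μ.prod μ) := by
    simpa [ContinuousLinearMap.rotation_apply, Pi.mul_def] using
      (hL.comp_snd μ).integrable_mul (memLp_fderiv_rotation IsGaussian.memLp_two_id hh hK 0)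
  calc ∫ x, L x * h x ∂μ
      = ∫ z, L z.2 * fderiv ℝ h z.1 z.2 ∂(μ.prod μ) := by
        simpa [ContinuousLinearMap.rotation_apply] using hsin.unique hrot
    _ = ∫ x, ∫ y, L y * fderiv ℝ h x y ∂μ ∂μ := integral_prod _ hint
    _ = ∫ x, covarianceBilinDual μ L (fderiv ℝ h x) ∂μ := by
        simp only [covarianceBilinDual_apply_of_centered hμ]

theorem integral_comp_rotation_mul_fderiv (hμ : μ[id] = 0) {f : E → ℝ} {K : ℝ≥0}
    (hf : ContDiff ℝ 1 f) (hK : LipschitzWith K f) (θ : ℝ) :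
    ∫ z, f (ℛ (-θ) z).1 * fderiv ℝ f z.1 z.2 ∂(μ.prod μ) =
      -Real.sin θ * ∫ z, covarianceBilinDual μ (fderiv ℝ f z.1) (fderiv ℝ f (ℛ (-θ) z).1)
        ∂(μ.prod μ) := by
  have hid : MemLp id 2 (μ.prod μ) := IsGaussian.memLp_two_id
  have hint : Integrable (fun z ↦ f (ℛ (-θ) z).1 * fderiv ℝ f z.1 z.2) (μ.prod μ) := by
    have hrot := (ContinuousLinearMap.fst ℝ E E ∘L ℛ (-θ)).comp_memLp' hid
    simpa [ContinuousLinearMap.rotation_apply, Pi.mul_def] using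
      (memLp_comp_of_lipschitzWith hK hrot).integrable_mul (memLp_fderiv_rotation hid hf hK 0)
  rw [integral_prod _ hint, integral_prod _ (integrable_covarianceBilinDual_fderiv hf hK
    continuous_fst (by fun_prop)), ← integral_const_mul]
  congr with x
  let T : E → E := fun y ↦ (ℛ (-θ) (x, y)).1
  have hT (y : E) : HasFDerivAt T (-Real.sin θ • ContinuousLinearMap.id ℝ E) y := by
    simpa [T, ContinuousLinearMap.rotation_apply] using
      ((hasFDerivAt_id (𝕜 := ℝ) y).const_smul (-Real.sin θ)).const_add (Real.cos θ • x)
  have hTK : LipschitzWith _ T :=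
    (ContinuousLinearMap.fst ℝ E E ∘L ℛ (-θ)).lipschitz.comp (LipschitzWith.prodMk_left x)
  have hfT (y : E) : fderiv ℝ (fun y ↦ f (T y)) y = -Real.sin θ • fderiv ℝ f (T y) := by
    simpa [Function.comp_def] using
      ((hf.differentiable one_ne_zero _).hasFDerivAt.comp y (hT y)).fderiv
  have hstein := integral_dual_mul_of_centered hμ (fderiv ℝ f x) (h := fun y ↦ f (T y))
    (hf.comp (by fun_prop)) (hK.comp hTK)
  simp only [hfT, map_smul, smul_eq_mul, integral_const_mul] at hstein
  simpa only [mul_comm] using hstein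

theorem integral_covarianceBilinDual_fderiv_rotation_le (hμ : μ[id] = 0) {f : E → ℝ} {K : ℝ≥0}
    (hf : ContDiff ℝ 1 f) (hK : LipschitzWith K f) (θ : ℝ) :
    ∫ z, covarianceBilinDual μ (fderiv ℝ f z.1) (fderiv ℝ f (ℛ θ z).1) ∂(μ.prod μ) ≤
      ∫ x, covarianceBilinDual μ (fderiv ℝ f x) (fderiv ℝ f x) ∂μ := by
  let Q : E → ℝ := fun x ↦ covarianceBilinDual μ (fderiv ℝ f x) (fderiv ℝ f x)
  have hint {X Y : E × E → E} (hX : Continuous X) (hY : Continuous Y) :=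
    integrable_covarianceBilinDual_fderiv (μ := μ) (ν := μ.prod μ) hf hK hX hY
  have hQ : Continuous Q := by
    have hf' := hf.continuous_fderiv one_ne_zero
    exact ((covarianceBilinDual μ).continuous.comp hf').clm_apply hf'
  have hpolar (L M : StrongDual ℝ E) : covarianceBilinDual μ L M ≤
      2⁻¹ * (covarianceBilinDual μ L L + covarianceBilinDual μ M M) := by
    have := covarianceBilinDual_self_nonneg (μ := μ) (L - M)
    simp only [map_sub, sub_apply, covarianceBilinDual_comm M L] at this
    linarith
  have hrot : ∫ z, Q (ℛ θ z).1 ∂(μ.prod μ) = ∫ x, Q x ∂μ := by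
    simpa [integral_fun_fst Q] using integral_mul_comp_rotation hμ (v := 1) (w := fun z ↦ Q z.1)
      continuous_one (by fun_prop) θ
  calc ∫ z, covarianceBilinDual μ (fderiv ℝ f z.1) (fderiv ℝ f (ℛ θ z).1) ∂(μ.prod μ)
      ≤ ∫ z, 2⁻¹ * (Q z.1 + Q (ℛ θ z).1) ∂(μ.prod μ) :=
        integral_mono (hint continuous_fst (by fun_prop)) (((hint continuous_fst continuous_fst).add
          (hint (by fun_prop) (by fun_prop))).const_mul _) fun z ↦ hpolar _ _
    _ = ∫ x, Q x ∂μ := by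
        rw [integral_const_mul, integral_add (hint continuous_fst continuous_fst)
          (hint (by fun_prop) (by fun_prop)), hrot, integral_fun_fst Q]
        rw [probReal_univ, one_smul]
        ring

theorem hasDerivAt_integral_mul_comp_rotation_self (hμ : μ[id] = 0) {f : E → ℝ} {K : ℝ≥0}
    (hf : ContDiff ℝ 1 f) (hK : LipschitzWith K f) (θ : ℝ) :
    HasDerivAt (fun t ↦ ∫ z, f z.1 * f (ℛ t z).1 ∂(μ.prod μ))
      (-Real.sin θ * ∫ z, covarianceBilinDual μ (fderiv ℝ f z.1) (fderiv ℝ f (ℛ (-θ) z).1)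
        ∂(μ.prod μ)) θ := by
  have := hf.continuous_fderiv one_ne_zero
  have hf2 : MemLp f 2 μ := memLp_comp_of_lipschitzWith hK IsGaussian.memLp_two_id
  rw [← integral_comp_rotation_mul_fderiv hμ hf hK, ← integral_mul_comp_rotation hμ
    (v := fun z ↦ f z.1) (w := fun z ↦ fderiv ℝ f z.1 z.2) (by fun_prop) (by fun_prop)]
  exact hasDerivAt_integral_mul_comp_rotation IsGaussian.memLp_two_id (hf2.comp_fst μ) hf hK θ

/-- The interpolation `t ↦ ∬ f(x) f(x cos t + y sin t)` runs from `∫ f²` at `t = 0` to `(∫ f)²` at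
`t = π/2`, with derivative at least `-sin t` times the right-hand side. -/
theorem variance_le_integral_covarianceBilinDual_of_centered (hμ : μ[id] = 0) {f : E → ℝ} {K : ℝ≥0}
    (hf : ContDiff ℝ 1 f) (hK : LipschitzWith K f) :
    Var[f; μ] ≤ ∫ x, covarianceBilinDual μ (fderiv ℝ f x) (fderiv ℝ f x) ∂μ := by
  have hf2 : MemLp f 2 μ := memLp_comp_of_lipschitzWith hK IsGaussian.memLp_two_id
  set I := ∫ x, covarianceBilinDual μ (fderiv ℝ f x) (fderiv ℝ f x) ∂μ
  let G := fun t ↦ ∫ z, f z.1 * f (ℛ t z).1 ∂(μ.prod μ)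
  have hder (θ : ℝ) := (hasDerivAt_integral_mul_comp_rotation_self hμ hf hK θ).sub
    ((Real.hasDerivAt_cos θ).mul_const I)
  have hmono : MonotoneOn (fun t ↦ G t - Real.cos t * I) (Set.Icc 0 (Real.pi / 2)) := by
    refine monotoneOn_of_hasDerivWithinAt_nonneg (convex_Icc _ _)
      (fun θ _ ↦ (hder θ).continuousAt.continuousWithinAt)
      (fun θ _ ↦ (hder θ).hasDerivWithinAt) fun θ hθ ↦ ?_
    rw [interior_Icc] at hθ
    have hsin : 0 ≤ Real.sin θ :=
      Real.sin_nonneg_of_nonneg_of_le_pi hθ.1.le (by linarith [hθ.2, Real.pi_pos])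
    linarith [mul_le_mul_of_nonneg_left
      (integral_covarianceBilinDual_fderiv_rotation_le hμ hf hK (-θ)) hsin]
  have h_zero : G 0 = ∫ x, f x ^ 2 ∂μ := by
    simp [G, ContinuousLinearMap.rotation_apply, integral_fun_fst (fun x ↦ f x * f x), sq]
  have h_pi_div_two : G (Real.pi / 2) = (∫ x, f x ∂μ) ^ 2 := by
    simp [G, ContinuousLinearMap.rotation_apply, integral_prod_mul, sq]
  have hle := hmono (Set.left_mem_Icc.2 (by positivity)) (Set.right_mem_Icc.2 (by positivity))
    (by positivity)
  simp only [h_zero, h_pi_div_two, Real.cos_zero, Real.cos_pi_div_two] at hle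
  rw [variance_eq_sub hf2]
  simp only [Pi.pow_apply]
  linarith

theorem covarianceBilinDual_map_sub_const (c : E) :
    covarianceBilinDual (μ.map (fun x ↦ x - c)) = covarianceBilinDual μ := by
  ext L M
  have hint (N : StrongDual ℝ E) : Integrable N μ :=
    (N.comp_memLp' IsGaussian.memLp_two_id).integrable one_le_two
  rw [covarianceBilinDual_eq_covariance IsGaussian.memLp_two_id,
    covarianceBilinDual_eq_covariance IsGaussian.memLp_two_id,
    covariance_map (by fun_prop) (by fun_prop) (by fun_prop)]
  simp [Function.comp_def, covariance_sub_const_left, covariance_sub_const_right, hint]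

theorem integral_id_map_sub_integral : (μ.map (fun x ↦ x - ∫ y, y ∂μ))[id] = 0 := by
  have hint : Integrable id μ := IsGaussian.memLp_two_id.integrable one_le_two
  rw [integral_map (by fun_prop) (by fun_prop)]
  simpa [sub_eq_zero] using integral_sub hint (integrable_const (∫ y, y ∂μ))

theorem integral_dual_sub_integral_mul (L : StrongDual ℝ E) {h : E → ℝ} {K : ℝ≥0}
    (hh : ContDiff ℝ 1 h) (hK : LipschitzWith K h) :
    ∫ x, L (x - ∫ y, y ∂μ) * h x ∂μ = ∫ x, covarianceBilinDual μ L (fderiv ℝ h x) ∂μ := by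
  set m := ∫ y, y ∂μ
  have hstein := integral_dual_mul_of_centered (μ := μ.map (fun x ↦ x - m))
    integral_id_map_sub_integral L (h := fun x ↦ h (x + m)) (hh.comp (by fun_prop))
    (hK.comp (IsometryEquiv.addRight m).isometry.lipschitz)
  simp only [covarianceBilinDual_map_sub_const, fderiv_comp_add_right] at hstein
  rw [integral_map (by fun_prop) (by fun_prop), integral_map (by fun_prop) (by fun_prop)] at hstein
  simpa using hstein

theorem variance_le_integral_covarianceBilinDual {f : E → ℝ} {K : ℝ≥0}
    (hf : ContDiff ℝ 1 f) (hK : LipschitzWith K f) :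
    Var[f; μ] ≤ ∫ x, covarianceBilinDual μ (fderiv ℝ f x) (fderiv ℝ f x) ∂μ := by
  set m := ∫ y, y ∂μ
  have hvar := variance_le_integral_covarianceBilinDual_of_centered (μ := μ.map (fun x ↦ x - m))
    integral_id_map_sub_integral (f := fun x ↦ f (x + m)) (hf.comp (by fun_prop))
    (hK.comp (IsometryEquiv.addRight m).isometry.lipschitz)
  have hfm := hf.continuous.measurable
  simp only [covarianceBilinDual_map_sub_const, fderiv_comp_add_right] at hvar
  rw [variance_map (by fun_prop) (by fun_prop), integral_map (by fun_prop) (by fun_prop)] at hvar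
  simpa [Function.comp_def] using hvar

end Gaussian

section PartialDeriv

variable {ι : Type*} [DecidableEq ι]

/-- The partial derivative `∂ᵢ f` of a function on `ℝ^ι`, as the value of the Fréchet derivative on
a vector of the standard basis. -/
def partialDeriv (i : ι) (f : (ι → ℝ) → ℝ) (x : ι → ℝ) : ℝ := fderiv ℝ f x (Pi.single i 1)

theorem hasCompactSupport_partialDeriv (i : ι) {f : (ι → ℝ) → ℝ} (hf : HasCompactSupport f) :
    HasCompactSupport (partialDeriv i f) :=
  hf.fderiv_apply ℝ (Pi.single i 1)

theorem partialDeriv_mul [Finite ι] (i : ι) {f g : (ι → ℝ) → ℝ} {x : ι → ℝ}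
    (hf : DifferentiableAt ℝ f x) (hg : DifferentiableAt ℝ g x) :
    partialDeriv i (fun y ↦ f y * g y) x = f x * partialDeriv i g x + g x * partialDeriv i f x := by
  have := Fintype.ofFinite ι
  simp [partialDeriv, fderiv_fun_mul hf hg]

theorem contDiff_partialDeriv [Fintype ι] (i : ι) {f : (ι → ℝ) → ℝ} {n : ℕ∞}
    (hf : ContDiff ℝ (n + 1) f) : ContDiff ℝ n (partialDeriv i f) :=
  (hf.fderiv_right le_rfl).clm_apply contDiff_const

end PartialDeriv

section ProductGaussian

open ProbabilityTheory

variable {ι : Type*} [Fintype ι]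

section Pi

variable {E : ι → Type*} [∀ i, NormedAddCommGroup (E i)] [∀ i, NormedSpace ℝ (E i)]
  [∀ i, MeasurableSpace (E i)] [∀ i, BorelSpace (E i)] [∀ i, SecondCountableTopology (E i)]
  [∀ i, CompleteSpace (E i)]

instance isGaussian_pi (ν : ∀ i, Measure (E i)) [∀ i, IsGaussian (ν i)] :
    IsGaussian (Measure.pi ν) := by
  have hlaw (i : ι) : HasGaussianLaw (fun x : ∀ i, E i ↦ x i) (Measure.pi ν) :=
    ⟨by rw [(measurePreserving_eval ν i).map_eq]; infer_instance⟩
  simpa using (iIndepFun.hasGaussianLaw hlaw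
    (iIndepFun_pi (X := fun _ ↦ id) fun _ ↦ aemeasurable_id)).isGaussian_map

end Pi

variable (m : ι → ℝ) (v : ι → ℝ≥0)

theorem integral_id_pi_gaussianReal :
    ∫ x, x ∂(Measure.pi fun i ↦ gaussianReal (m i) (v i)) = m := by
  ext i
  rw [eval_integral fun i ↦ (IsGaussian.integrable_id.eval i)]
  simpa using integral_comp_eval (μ := fun i ↦ gaussianReal (m i) (v i)) (i := i)
    (f := id) (by fun_prop)

variable [DecidableEq ι]

theorem covariance_eval_pi_gaussianReal (i j : ι) :
    cov[fun x ↦ x i, fun x ↦ x j; Measure.pi fun i ↦ gaussianReal (m i) (v i)] =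
      if i = j then (v i : ℝ) else 0 := by
  split_ifs with hij
  · subst hij
    have hi := measurePreserving_eval (fun i ↦ gaussianReal (m i) (v i)) i
    rw [covariance_self hi.measurable.aemeasurable]
    exact (hi.variance_fun_comp (f := id) (by fun_prop)).trans variance_id_gaussianReal
  · exact ((iIndepFun_pi (X := fun _ ↦ id) fun _ ↦ aemeasurable_id).indepFun hij).covariance_eq_zero
      (IsGaussian.memLp_two_id.eval i) (IsGaussian.memLp_two_id.eval j)

theorem covarianceBilinDual_pi_gaussianReal (L M : StrongDual ℝ (ι → ℝ)) :
    covarianceBilinDual (Measure.pi fun i ↦ gaussianReal (m i) (v i)) L M =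
      ∑ i, v i * (L (Pi.single i 1) * M (Pi.single i 1)) := by
  set ν := Measure.pi fun i ↦ gaussianReal (m i) (v i)
  have hcoord (c : ℝ) (i : ι) : MemLp (fun x : ι → ℝ ↦ c * x i) 2 ν :=
    (IsGaussian.memLp_two_id.eval i).const_mul c
  have hsum (N : StrongDual ℝ (ι → ℝ)) : ⇑N = fun x ↦ ∑ i, N (Pi.single i 1) * x i := by
    ext x
    conv_lhs => rw [← (Pi.basisFun ℝ ι).sum_repr x]
    simp [mul_comm]
  conv_lhs => rw [covarianceBilinDual_eq_covariance IsGaussian.memLp_two_id, hsum L, hsum M,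
    covariance_fun_sum_fun_sum (fun _ ↦ hcoord _ _) fun _ ↦ hcoord _ _]
  simp only [covariance_const_mul_left, covariance_const_mul_right, ν,
    covariance_eval_pi_gaussianReal, mul_ite, mul_zero, Finset.sum_ite_eq, Finset.mem_univ, if_true]
  exact Finset.sum_congr rfl fun i _ ↦ by ring

theorem integral_sub_mean_mul_pi_gaussianReal (i : ι) {h : (ι → ℝ) → ℝ} {K : ℝ≥0}
    (hh : ContDiff ℝ 1 h) (hK : LipschitzWith K h) :
    ∫ x, (x i - m i) * h x ∂(Measure.pi fun i ↦ gaussianReal (m i) (v i)) =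
      v i * ∫ x, partialDeriv i h x ∂(Measure.pi fun i ↦ gaussianReal (m i) (v i)) := by
  have hstein := integral_dual_sub_integral_mul (μ := Measure.pi fun i ↦ gaussianReal (m i) (v i))
    (.proj i) hh hK
  simpa [partialDeriv, integral_id_pi_gaussianReal, covarianceBilinDual_pi_gaussianReal,
    Pi.single_apply, integral_const_mul] using hstein

theorem variance_le_sum_integral_partialDeriv_sq {f : (ι → ℝ) → ℝ} {K : ℝ≥0} (hf : ContDiff ℝ 1 f)
    (hK : LipschitzWith K f) :
    Var[f; Measure.pi fun i ↦ gaussianReal (m i) (v i)] ≤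
      ∫ x, ∑ i, v i * partialDeriv i f x ^ 2 ∂(Measure.pi fun i ↦ gaussianReal (m i) (v i)) := by
  simpa only [partialDeriv, covarianceBilinDual_pi_gaussianReal, ← sq] using
    variance_le_integral_covarianceBilinDual
      (μ := Measure.pi fun i ↦ gaussianReal (m i) (v i)) hf hK

/-- The Ornstein-Uhlenbeck generator `tr (A ∇²f) - ⟨A (x - m), ∇f⟩` on `ℝ^ι`. For symmetric `A`
it is reversible with respect to the product of the Gaussian laws with means `m i` and unit
variances. -/
def ornsteinUhlenbeck (A : Matrix ι ι ℝ) (m : ι → ℝ) (f : (ι → ℝ) → ℝ) (x : ι → ℝ) : ℝ :=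
  ∑ i, ∑ j, A i j * (partialDeriv j (partialDeriv i f) x - (x j - m j) * partialDeriv i f x)

theorem integral_mul_partialDeriv_sub {f g : (ι → ℝ) → ℝ} (hf : ContDiff ℝ 2 f)
    (hg : ContDiff ℝ 1 g) (hgc : HasCompactSupport g) (i j : ι) :
    ∫ x, g x * (partialDeriv i (partialDeriv j f) x - (x i - m i) * partialDeriv j f x)
        ∂(Measure.pi fun i ↦ gaussianReal (m i) 1) =
      -∫ x, partialDeriv i g x * partialDeriv j f x ∂(Measure.pi fun i ↦ gaussianReal (m i) 1) := by
  set ν := Measure.pi fun i ↦ gaussianReal (m i) 1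
  have hf' : ContDiff ℝ 1 (partialDeriv j f) := contDiff_partialDeriv j (n := 1) hf
  have hf'' : Continuous (partialDeriv i (partialDeriv j f)) :=
    (contDiff_partialDeriv i (n := 0) hf').continuous
  have hg' : Continuous (partialDeriv i g) := (contDiff_partialDeriv i (n := 0) hg).continuous
  obtain ⟨K, hK⟩ := (hg.mul hf').lipschitzWith_of_hasCompactSupport hgc.mul_right one_ne_zero
  have hstein := integral_sub_mean_mul_pi_gaussianReal m 1 i (hg.mul hf') hK
  have hprod (x : ι → ℝ) := partialDeriv_mul i (hg.differentiable one_ne_zero x)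
    (hf'.differentiable one_ne_zero x)
  have hint {u w : (ι → ℝ) → ℝ} (hu : Continuous u) (hw : Continuous w)
      (huc : HasCompactSupport u) : Integrable (fun x ↦ u x * w x) ν :=
    (hu.mul hw).integrable_of_hasCompactSupport huc.mul_right
  have hgf := hint hg.continuous hf'' hgc
  have hgf' := hint hg' hf'.continuous (hasCompactSupport_partialDeriv i hgc)
  have hgx : Integrable (fun x ↦ (x i - m i) * (g x * partialDeriv j f x)) ν := by
    simpa only [mul_left_comm] using hint hg.continuous
      (w := fun x ↦ (x i - m i) * partialDeriv j f x) (by fun_prop) hgc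
  simp only [hprod, Pi.one_apply, NNReal.coe_one, one_mul] at hstein
  rw [integral_add hgf (by simpa only [mul_comm] using hgf')] at hstein
  calc ∫ x, g x * (partialDeriv i (partialDeriv j f) x - (x i - m i) * partialDeriv j f x) ∂ν
      = ∫ x, g x * partialDeriv i (partialDeriv j f) x ∂ν
          - ∫ x, (x i - m i) * (g x * partialDeriv j f x) ∂ν := by
        rw [← integral_sub hgf hgx]
        congr with x
        ring
    _ = -∫ x, partialDeriv i g x * partialDeriv j f x ∂ν := by
        rw [hstein]
        simp only [mul_comm]
        ring

theorem integral_mul_neg_ornsteinUhlenbeck (A : Matrix ι ι ℝ) {f g : (ι → ℝ) → ℝ}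
    (hf : ContDiff ℝ 2 f) (hg : ContDiff ℝ 1 g) (hgc : HasCompactSupport g) :
    ∫ x, g x * -ornsteinUhlenbeck A m f x ∂(Measure.pi fun i ↦ gaussianReal (m i) 1) =
      ∫ x, (fun i ↦ partialDeriv i f x) ⬝ᵥ A.mulVec (fun j ↦ partialDeriv j g x)
        ∂(Measure.pi fun i ↦ gaussianReal (m i) 1) := by
  have hf' (j : ι) : ContDiff ℝ 1 (partialDeriv j f) := contDiff_partialDeriv j (n := 1) hf
  have hf'' (i j : ι) : Continuous (partialDeriv i (partialDeriv j f)) :=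
    (contDiff_partialDeriv i (n := 0) (hf' j)).continuous
  have hg' (i : ι) : Continuous (partialDeriv i g) :=
    (contDiff_partialDeriv i (n := 0) hg).continuous
  set ν := Measure.pi fun i ↦ gaussianReal (m i) 1
  have hint (i j : ι) : Integrable (fun x ↦ -A i j * (g x * (partialDeriv j (partialDeriv i f) x -
      (x j - m j) * partialDeriv i f x))) ν :=
    Continuous.integrable_of_hasCompactSupport (by fun_prop) hgc.mul_right.mul_left
  have hint' (i j : ι) : Integrable (fun x ↦ A i j * (partialDeriv j g x * partialDeriv i f x)) ν :=
    Continuous.integrable_of_hasCompactSupport (by fun_prop)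
      (hasCompactSupport_partialDeriv j hgc).mul_right.mul_left
  calc ∫ x, g x * -ornsteinUhlenbeck A m f x ∂ν
      = ∫ x, ∑ i, ∑ j, -A i j * (g x * (partialDeriv j (partialDeriv i f) x -
          (x j - m j) * partialDeriv i f x)) ∂ν := by
        simp only [ornsteinUhlenbeck, ← Finset.sum_neg_distrib, Finset.mul_sum, neg_mul, mul_neg,
          mul_left_comm]
    _ = ∑ i, ∑ j, A i j * ∫ x, partialDeriv j g x * partialDeriv i f x ∂ν := by
        simp_rw [integral_finsetSum _ fun i _ ↦ integrable_finsetSum _ fun j _ ↦ hint i j,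
          integral_finsetSum _ fun j _ ↦ hint _ j, integral_const_mul, ν,
          integral_mul_partialDeriv_sub m hf hg hgc, neg_mul_neg]
    _ = ∫ x, ∑ i, ∑ j, A i j * (partialDeriv j g x * partialDeriv i f x) ∂ν := by
        simp_rw [integral_finsetSum _ fun i _ ↦ integrable_finsetSum _ fun j _ ↦ hint' i j,
          integral_finsetSum _ fun j _ ↦ hint' _ j, integral_const_mul]
    _ = ∫ x, (fun i ↦ partialDeriv i f x) ⬝ᵥ A.mulVec (fun j ↦ partialDeriv j g x) ∂ν := by
        simp only [dotProduct, Matrix.mulVec, Finset.mul_sum, mul_left_comm, mul_comm]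

theorem variance_le_mul_integral_neg_ornsteinUhlenbeck {A : Matrix ι ι ℝ} {K : ℝ}
    (hA : ∀ w : ι → ℝ, w ⬝ᵥ w ≤ K * (w ⬝ᵥ A.mulVec w)) {f : (ι → ℝ) → ℝ}
    (hf : ContDiff ℝ 2 f) (hfc : HasCompactSupport f) :
    Var[f; Measure.pi fun i ↦ gaussianReal (m i) 1] ≤
      K * ∫ x, f x * -ornsteinUhlenbeck A m f x ∂(Measure.pi fun i ↦ gaussianReal (m i) 1) := by
  set ν := Measure.pi fun i ↦ gaussianReal (m i) 1
  obtain ⟨C, hC⟩ := hf.lipschitzWith_of_hasCompactSupport hfc two_ne_zero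
  have hf' (i : ι) : Continuous (partialDeriv i f) :=
    (contDiff_partialDeriv i (n := 1) hf).continuous
  have hfc' (i : ι) := hasCompactSupport_partialDeriv i hfc
  calc Var[f; ν]
      ≤ ∫ x, (fun i ↦ partialDeriv i f x) ⬝ᵥ (fun i ↦ partialDeriv i f x) ∂ν := by
        simpa [dotProduct, sq] using
          variance_le_sum_integral_partialDeriv_sq m 1 (hf.of_le one_le_two) hC
    _ ≤ ∫ x, K * ((fun i ↦ partialDeriv i f x) ⬝ᵥ A.mulVec (fun i ↦ partialDeriv i f x)) ∂ν := by
        refine integral_mono ?_ ?_ fun x ↦ hA _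
        · exact integrable_finsetSum _ fun i _ ↦
            ((hf' i).mul (hf' i)).integrable_of_hasCompactSupport (hfc' i).mul_right
        · refine (integrable_finsetSum _ fun i _ ↦ ?_).const_mul K
          refine Continuous.integrable_of_hasCompactSupport ?_ (hfc' i).mul_right
          simp only [Matrix.mulVec, dotProduct]
          fun_prop
    _ = K * ∫ x, f x * -ornsteinUhlenbeck A m f x ∂ν := by
        rw [integral_const_mul, integral_mul_neg_ornsteinUhlenbeck m A hf (hf.of_le one_le_two) hfc]

end ProductGaussian

section Laplacian

variable {ι : Type*} [Fintype ι] [DecidableEq ι] {w : ι → ι → ℝ}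

/-- The Laplacian (Kirchhoff) matrix of the graph on `ι` whose edge `{x, y}` has weight `w x y`. -/
def laplacianMatrix (w : ι → ι → ℝ) : Matrix ι ι ℝ := .diagonal (fun x ↦ ∑ y, w x y) - .of w

theorem laplacianMatrix_mulVec (u : ι → ℝ) (x : ι) :
    (laplacianMatrix w).mulVec u x = ∑ y, w x y * (u x - u y) := by
  rw [laplacianMatrix, Matrix.sub_mulVec, Pi.sub_apply, Matrix.mulVec_diagonal]
  simp only [Matrix.mulVec, dotProduct, Matrix.of_apply, Finset.sum_mul, mul_sub,
    Finset.sum_sub_distrib]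

theorem sum_laplacianMatrix_mul (hw : ∀ x y, w x y = w y x) (S : ι → ι → ℝ) :
    ∑ x, ∑ y, laplacianMatrix w x y * S x y =
      1 / 2 * ∑ x, ∑ y, w x y * (S y y - S y x - S x y + S x x) := by
  have hdiag : ∑ x, ∑ y, laplacianMatrix w x y * S x y = ∑ x, ∑ y, w x y * (S x x - S x y) := by
    simp [laplacianMatrix, sub_mul, Matrix.diagonal_apply, ite_mul, mul_sub,
      Finset.sum_sub_distrib, Finset.sum_mul]
  have hswap : ∑ x, ∑ y, w x y * (S y y - S y x) = ∑ x, ∑ y, w x y * (S x x - S x y) := by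
    rw [Finset.sum_comm]
    simp only [hw]
  rw [hdiag]
  simp only [mul_add, mul_sub, Finset.sum_add_distrib, Finset.sum_sub_distrib] at hswap ⊢
  linarith

end Laplacian

section Hardy

theorem sum_filter_succ_mem_le_half_sum (s : Finset ℕ) {F : ℕ → ℕ → ℝ} (hF : ∀ x y, 0 ≤ F x y)
    (hsymm : ∀ x y, F x y = F y x) :
    ∑ x ∈ s with x + 1 ∈ s, F x (x + 1) ≤ 1 / 2 * ∑ x ∈ s, ∑ y ∈ s, F x y := by
  have hright : ∑ x ∈ s, ∑ y ∈ s, (if y = x + 1 then F x y else 0) =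
      ∑ x ∈ s with x + 1 ∈ s, F x (x + 1) := by
    simp [Finset.sum_filter]
  have hleft : ∑ x ∈ s, ∑ y ∈ s, (if x = y + 1 then F x y else 0) =
      ∑ x ∈ s with x + 1 ∈ s, F x (x + 1) := by
    rw [Finset.sum_comm, ← hright]
    simp only [hsymm]
  have hle : ∑ x ∈ s, ∑ y ∈ s, ((if y = x + 1 then F x y else 0) +
      (if x = y + 1 then F x y else 0)) ≤ ∑ x ∈ s, ∑ y ∈ s, F x y := by
    gcongr with x _ y _
    split_ifs <;> first | lia | linarith [hF x y]
  simp only [Finset.sum_add_distrib] at hle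
  linarith

theorem sum_range_sq_le_sq_mul_sum_range_sub_sq {g : ℕ → ℝ} (hg : g 0 = 0) (n : ℕ) :
    ∑ k ∈ Finset.range n, g k ^ 2 ≤ n ^ 2 * ∑ k ∈ Finset.range n, (g (k + 1) - g k) ^ 2 := by
  have hpoint (k : ℕ) (hk : k ∈ Finset.range n) :
      g k ^ 2 ≤ n * ∑ j ∈ Finset.range n, (g (j + 1) - g j) ^ 2 := by
    have hkn : k ≤ n := (Finset.mem_range.1 hk).le
    calc g k ^ 2 = (∑ j ∈ Finset.range k, (g (j + 1) - g j)) ^ 2 := by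
          rw [Finset.sum_range_sub, hg, sub_zero]
      _ ≤ k * ∑ j ∈ Finset.range k, (g (j + 1) - g j) ^ 2 := by
          simpa using sq_sum_le_card_mul_sum_sq (s := Finset.range k) (f := fun j ↦ g (j + 1) - g j)
      _ ≤ n * ∑ j ∈ Finset.range n, (g (j + 1) - g j) ^ 2 := by
          gcongr
  calc ∑ k ∈ Finset.range n, g k ^ 2
      ≤ ∑ _k ∈ Finset.range n, n * ∑ j ∈ Finset.range n, (g (j + 1) - g j) ^ 2 :=
        Finset.sum_le_sum hpoint
    _ = n ^ 2 * ∑ k ∈ Finset.range n, (g (k + 1) - g k) ^ 2 := by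
        rw [Finset.sum_const, Finset.card_range, nsmul_eq_mul]
        ring

end Hardy

section Conductance

theorem cGamma_pos {γ : ℝ} (hγ : 0 < γ) : 0 < cGamma γ := by
  have hsum : Summable fun z : ℤ ↦ if z = 0 then (0 : ℝ) else |(z : ℝ)| ^ (-(1 + γ)) :=
    .of_nonneg_of_le (fun z ↦ by split_ifs <;> positivity)
      (fun z ↦ by split_ifs <;> [positivity; rfl]) (Real.summable_abs_int_rpow (by linarith))
  exact inv_pos.2 (hsum.tsum_pos (fun z ↦ by split_ifs <;> positivity) 1 (by simp))

theorem pker_nonneg {γ : ℝ} (hγ : 0 < γ) (z : ℝ) : 0 ≤ pker γ z := by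
  have := cGamma_pos hγ
  rw [pker]
  split_ifs <;> positivity

theorem pker_neg (γ z : ℝ) : pker γ (-z) = pker γ z := by
  simp [pker]

theorem pker_sub_comm (γ x y : ℝ) : pker γ (x - y) = pker γ (y - x) := by
  rw [← pker_neg, neg_sub]

theorem pker_one (γ : ℝ) : pker γ 1 = cGamma γ := by
  simp [pker]

variable {γ : ℝ} {n : ℕ}

/-- The drift matrix of the generator: the Laplacian of the long-range kernel on `Λ_n`, together
with the unit rates at which the reservoirs act on the sites `1` and `n - 1`. -/
def driftMatrix (γ : ℝ) (n : ℕ) : Matrix ↥(Lam n) ↥(Lam n) ℝ :=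
  .diagonal (fun x ↦ (if (x : ℕ) = 1 then 1 else 0) + if (x : ℕ) = n - 1 then 1 else 0) +
    laplacianMatrix fun x y : ↥(Lam n) ↦ pker γ ((y : ℕ) - (x : ℕ))

theorem sum_driftMatrix_mul (hn : 2 ≤ n) (S : ℕ → ℕ → ℝ) :
    ∑ x, ∑ y, driftMatrix γ n x y * S x y = S 1 1 + S (n - 1) (n - 1) +
      1 / 2 * ∑ x ∈ Lam n, ∑ y ∈ Lam n, pker γ ((y : ℝ) - x) *
        (S y y - S y x - S x y + S x x) := by
  have h1 : 1 ∈ Lam n := Finset.mem_Icc.2 (by lia)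
  have hlast : n - 1 ∈ Lam n := Finset.mem_Icc.2 (by lia)
  simp only [driftMatrix, Matrix.add_apply, add_mul, Finset.sum_add_distrib, ite_mul, one_mul,
    Matrix.diagonal_apply, zero_mul, Finset.sum_ite_eq, Finset.mem_univ, if_true]
  rw [sum_laplacianMatrix_mul (fun x y ↦ pker_sub_comm γ _ _) (fun x y : ↥(Lam n) ↦ S x y),
    Finset.sum_coe_sort (Lam n) fun x ↦ if x = 1 then S x x else 0,
    Finset.sum_coe_sort (Lam n) fun x ↦ if x = n - 1 then S x x else 0,
    Finset.sum_ite_eq_of_mem' _ _ _ h1, Finset.sum_ite_eq_of_mem' _ _ _ hlast,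
    ← Finset.sum_coe_sort (Lam n)]
  simp_rw [← Finset.sum_coe_sort (Lam n)]

theorem IsDiscreteProfile.driftMatrix_mulVec {Φl Φr : ℝ} {ψ : ℕ → ℝ}
    (hψ : IsDiscreteProfile γ Φl Φr n ψ) (x : ↥(Lam n)) :
    (driftMatrix γ n).mulVec (fun y ↦ ψ y) x =
      (if (x : ℕ) = 1 then Φl else 0) + if (x : ℕ) = n - 1 then Φr else 0 := by
  have h := hψ x x.2
  rw [driftMatrix, Matrix.add_mulVec, Pi.add_apply, Matrix.mulVec_diagonal, laplacianMatrix_mulVec]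
  rw [Finset.sum_coe_sort (Lam n) fun y ↦ pker γ ((y : ℝ) - (x : ℕ)) * (ψ x - ψ y)]
  have hneg : ∑ y ∈ Lam n, pker γ ((y : ℝ) - (x : ℕ)) * (ψ x - ψ y) =
      -∑ y ∈ Lam n, pker γ ((y : ℝ) - (x : ℕ)) * (ψ y - ψ x) := by
    simp only [← Finset.sum_neg_distrib, ← mul_neg, neg_sub]
  rw [hneg, ← sub_eq_zero, ← neg_eq_zero, ← h]
  grind

theorem dotProduct_driftMatrix_mulVec (hn : 2 ≤ n) (g : ℕ → ℝ) :
    (fun x : ↥(Lam n) ↦ g x) ⬝ᵥ (driftMatrix γ n).mulVec (fun x ↦ g x) = g 1 ^ 2 + g (n - 1) ^ 2 +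
      1 / 2 * ∑ x ∈ Lam n, ∑ y ∈ Lam n, pker γ ((y : ℝ) - x) * (g y - g x) ^ 2 := by
  have h := sum_driftMatrix_mul (γ := γ) hn fun x y ↦ g x * g y
  have hsq (a b : ℝ) : b * b - b * a - a * b + a * a = (b - a) ^ 2 := by ring
  simp only [hsq] at h
  simpa only [dotProduct, Matrix.mulVec, Finset.mul_sum, mul_left_comm, sq] using h

theorem sum_range_sub_sq_eq (hn : 2 ≤ n) {g : ℕ → ℝ} (h0 : g 0 = 0) (hgn : g n = 0) :
    ∑ k ∈ Finset.range n, (g (k + 1) - g k) ^ 2 = g 1 ^ 2 + g (n - 1) ^ 2 +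
      ∑ x ∈ Lam n with x + 1 ∈ Lam n, (g (x + 1) - g x) ^ 2 := by
  obtain ⟨m, rfl⟩ := Nat.exists_eq_add_of_le' hn
  have hfilter : {x ∈ Lam (m + 2) | x + 1 ∈ Lam (m + 2)} = Finset.Ico 1 (m + 1) := by
    ext x
    simp only [Finset.mem_filter, Finset.mem_Icc, Finset.mem_Ico]
    lia
  rw [hfilter, Finset.sum_Ico_eq_sum_range, Finset.sum_range_succ, Finset.sum_range_succ', h0, hgn]
  simp only [add_comm 1, Nat.add_sub_cancel, Nat.add_succ_sub_one]
  ring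

theorem sum_Lam_sq_le (hn : 2 ≤ n) {g : ℕ → ℝ} (h0 : g 0 = 0) (hgn : g n = 0) :
    ∑ x ∈ Lam n, g x ^ 2 ≤ n ^ 2 * (g 1 ^ 2 + g (n - 1) ^ 2 +
      ∑ x ∈ Lam n with x + 1 ∈ Lam n, (g (x + 1) - g x) ^ 2) := by
  calc ∑ x ∈ Lam n, g x ^ 2 ≤ ∑ k ∈ Finset.range n, g k ^ 2 :=
        Finset.sum_le_sum_of_subset_of_nonneg
          (fun k ↦ by rw [Finset.mem_Icc, Finset.mem_range]; lia) fun _ _ _ ↦ sq_nonneg _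
    _ ≤ n ^ 2 * ∑ k ∈ Finset.range n, (g (k + 1) - g k) ^ 2 :=
        sum_range_sq_le_sq_mul_sum_range_sub_sq h0 n
    _ = _ := by rw [sum_range_sub_sq_eq hn h0 hgn]

theorem cGamma_mul_sum_sub_sq_le (hγ : 0 < γ) (g : ℕ → ℝ) :
    cGamma γ * ∑ x ∈ Lam n with x + 1 ∈ Lam n, (g (x + 1) - g x) ^ 2 ≤
      1 / 2 * ∑ x ∈ Lam n, ∑ y ∈ Lam n, pker γ ((y : ℝ) - x) * (g y - g x) ^ 2 := by
  have h := sum_filter_succ_mem_le_half_sum (Lam n)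
    (F := fun x y ↦ pker γ ((y : ℝ) - x) * (g y - g x) ^ 2)
    (fun x y ↦ mul_nonneg (pker_nonneg hγ _) (sq_nonneg _))
    (fun x y ↦ by rw [pker_sub_comm, sub_sq_comm])
  simpa only [Nat.cast_add, Nat.cast_one, add_sub_cancel_left, pker_one, ← Finset.mul_sum] using h

theorem coordN_coe (x : ↥(Lam n)) (φ : Conf n) : coordN n x φ = φ x :=
  dif_pos x.2

theorem dotProduct_self_le_mul_driftMatrix (hγ : 0 < γ) (hn : 2 ≤ n) (v : Conf n) :
    v ⬝ᵥ v ≤ (1 + (cGamma γ)⁻¹) * n ^ 2 * (v ⬝ᵥ (driftMatrix γ n).mulVec v) := by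
  obtain ⟨g, hg, h0, hgn⟩ : ∃ g : ℕ → ℝ, (∀ x : ↥(Lam n), g x = v x) ∧ g 0 = 0 ∧ g n = 0 :=
    ⟨fun k ↦ coordN n k v, fun x ↦ coordN_coe x v, dif_neg (by simp [Lam]),
      dif_neg (by rw [Finset.mem_Icc]; lia)⟩
  obtain rfl : (fun x : ↥(Lam n) ↦ g x) = v := funext hg
  have hc := cGamma_pos hγ
  have hpoincare := sum_Lam_sq_le hn h0 hgn
  have hnear := cGamma_mul_sum_sub_sq_le (n := n) hγ g
  rw [dotProduct_driftMatrix_mulVec hn]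
  set B := g 1 ^ 2 + g (n - 1) ^ 2
  set N := ∑ x ∈ Lam n with x + 1 ∈ Lam n, (g (x + 1) - g x) ^ 2
  set I := 1 / 2 * ∑ x ∈ Lam n, ∑ y ∈ Lam n, pker γ ((y : ℝ) - x) * (g y - g x) ^ 2
  have hBN : B + N ≤ (1 + (cGamma γ)⁻¹) * (B + I) := by
    have hN : N ≤ (cGamma γ)⁻¹ * I := by rwa [inv_mul_eq_div, le_div_iff₀' hc]
    have hN0 : 0 ≤ N := Finset.sum_nonneg fun x _ ↦ sq_nonneg _
    have hI : 0 ≤ I := (mul_nonneg hc.le hN0).trans hnear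
    have hB : 0 ≤ (cGamma γ)⁻¹ * B := by positivity
    linarith
  calc (fun x : ↥(Lam n) ↦ g x) ⬝ᵥ (fun x : ↥(Lam n) ↦ g x)
      = ∑ x ∈ Lam n, g x ^ 2 := by
        simpa only [sq, dotProduct] using Finset.sum_coe_sort (Lam n) fun k ↦ g k * g k
    _ ≤ n ^ 2 * (B + N) := hpoincare
    _ ≤ n ^ 2 * ((1 + (cGamma γ)⁻¹) * (B + I)) := by gcongr
    _ = (1 + (cGamma γ)⁻¹) * n ^ 2 * (B + I) := by ring

end Conductance

section Generator

variable {γ Φl Φr : ℝ} {n : ℕ} {ψ : ℕ → ℝ} {f : Conf n → ℝ}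

theorem pdN_eq_partialDeriv {φ : Conf n} (hf : DifferentiableAt ℝ f φ) (x : ↥(Lam n)) :
    pdN n x f φ = partialDeriv x f φ := by
  have hupdate : HasDerivAt (Function.update φ x) (Pi.single x 1) (φ x) := hasDerivAt_update φ x _
  rw [pdN, dif_pos x.2]
  refine (HasFDerivAt.comp_hasDerivAt (φ x) ?_ hupdate).deriv
  simpa using hf.hasFDerivAt

theorem GLgen_eq_sum_driftMatrix_mul (hn : 2 ≤ n) (φ : Conf n) :
    GLgen γ Φl Φr n f φ = (n : ℝ) ^ γ *
      ((∑ x, ∑ y, driftMatrix γ n x y * (pdN n y (pdN n x f) φ - φ y * pdN n x f φ)) +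
        Φl * pdN n 1 f φ + Φr * pdN n (n - 1) f φ) := by
  have h := sum_driftMatrix_mul (γ := γ) hn
    fun x y ↦ pdN n y (pdN n x f) φ - coordN n y φ * pdN n x f φ
  simp only [coordN_coe] at h
  have hbulk (x y : ℕ) : (coordN n x φ - coordN n y φ) * (pdN n y f φ - pdN n x f φ) +
      (pdN n y (pdN n y f) φ - pdN n y (pdN n x f) φ - pdN n x (pdN n y f) φ +
        pdN n x (pdN n x f) φ) =
      pdN n y (pdN n y f) φ - coordN n y φ * pdN n y f φ -
        (pdN n x (pdN n y f) φ - coordN n x φ * pdN n y f φ) -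
        (pdN n y (pdN n x f) φ - coordN n y φ * pdN n x f φ) +
        (pdN n x (pdN n x f) φ - coordN n x φ * pdN n x f φ) := by ring
  rw [h, GLgen, GLleft, GLright, GLbulk]
  simp only [hbulk]
  ring

theorem sum_profile_mul_pdN (hn : 2 ≤ n) (hψ : IsDiscreteProfile γ Φl Φr n ψ) (φ : Conf n) :
    ∑ x : ↥(Lam n), ∑ y : ↥(Lam n), driftMatrix γ n x y * (ψ y * pdN n x f φ) =
      Φl * pdN n 1 f φ + Φr * pdN n (n - 1) f φ := by
  have h1 : 1 ∈ Lam n := Finset.mem_Icc.2 (by lia)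
  have hlast : n - 1 ∈ Lam n := Finset.mem_Icc.2 (by lia)
  calc ∑ x : ↥(Lam n), ∑ y : ↥(Lam n), driftMatrix γ n x y * (ψ y * pdN n x f φ)
      = ∑ x : ↥(Lam n), (driftMatrix γ n).mulVec (fun y ↦ ψ y) x * pdN n x f φ := by
        simp only [Matrix.mulVec, dotProduct, Finset.sum_mul, mul_assoc]
    _ = ∑ x ∈ Lam n, ((if x = 1 then Φl * pdN n x f φ else 0) +
          if x = n - 1 then Φr * pdN n x f φ else 0) := by
        simp only [hψ.driftMatrix_mulVec, add_mul, ite_mul, zero_mul, ← Finset.sum_coe_sort (Lam n)]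
    _ = Φl * pdN n 1 f φ + Φr * pdN n (n - 1) f φ := by
        rw [Finset.sum_add_distrib, Finset.sum_ite_eq_of_mem' _ _ _ h1,
          Finset.sum_ite_eq_of_mem' _ _ _ hlast]

theorem GLgen_eq_ornsteinUhlenbeck (hn : 2 ≤ n) (hψ : IsDiscreteProfile γ Φl Φr n ψ)
    (hf : ContDiff ℝ 2 f) (φ : Conf n) :
    GLgen γ Φl Φr n f φ =
      (n : ℝ) ^ γ * ornsteinUhlenbeck (driftMatrix γ n) (fun x ↦ ψ x) f φ := by
  have hpd (x : ↥(Lam n)) : pdN n x f = partialDeriv x f :=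
    funext fun φ ↦ pdN_eq_partialDeriv (hf.differentiable two_ne_zero φ) x
  have hpd' (x y : ↥(Lam n)) : pdN n y (partialDeriv x f) φ = partialDeriv y (partialDeriv x f) φ :=
    pdN_eq_partialDeriv ((contDiff_partialDeriv x (n := 1) hf).differentiable one_ne_zero φ) y
  rw [GLgen_eq_sum_driftMatrix_mul hn, add_assoc, ← sum_profile_mul_pdN hn hψ,
    ornsteinUhlenbeck]
  simp only [← Finset.sum_add_distrib, ← mul_add, hpd, hpd']
  refine congrArg _ (Finset.sum_congr rfl fun x _ ↦ Finset.sum_congr rfl fun y _ ↦ ?_)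
  ring

theorem variance_gaussianProduct_le_mul_integral_neg_GLgen (hγ : 0 < γ) (hn : 2 ≤ n)
    (hψ : IsDiscreteProfile γ Φl Φr n ψ) (hf : ContDiff ℝ 2 f) (hfc : HasCompactSupport f) :
    ProbabilityTheory.variance f (gaussianProduct n ψ) ≤ (1 + (cGamma γ)⁻¹) * (n : ℝ) ^ (2 - γ) *
      ∫ φ, f φ * -GLgen γ Φl Φr n f φ ∂(gaussianProduct n ψ) := by
  have hpow : (n : ℝ) ^ 2 = n ^ (2 - γ) * n ^ γ := by
    rw [← Real.rpow_add (by positivity), sub_add_cancel, Real.rpow_two]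
  have hbound := variance_le_mul_integral_neg_ornsteinUhlenbeck (fun x : ↥(Lam n) ↦ ψ x)
    (dotProduct_self_le_mul_driftMatrix hγ hn) hf hfc
  simp only [GLgen_eq_ornsteinUhlenbeck hn hψ hf, ← mul_neg, mul_left_comm _ ((n : ℝ) ^ γ),
    integral_const_mul]
  rw [hpow] at hbound
  rw [gaussianProduct]
  linarith

end Generator

theorem NESS_poincare_inequality_general {γ : ℝ} (hγ : 0 < γ) :
    ∃ C : ℝ, 0 < C ∧ ∀ Φl Φr : ℝ, ∀ n : ℕ, 2 ≤ n →
      ∀ ψ : ℕ → ℝ, IsDiscreteProfile γ Φl Φr n ψ →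
      ∀ f : Conf n → ℝ, ContDiff ℝ 2 f → HasCompactSupport f →
        (∫ φ, (f φ) ^ 2 ∂(gaussianProduct n ψ)) - (∫ φ, f φ ∂(gaussianProduct n ψ)) ^ 2
          ≤ C * (n : ℝ) ^ 2 *
            ∫ φ, f φ * (-(GLgen γ Φl Φr n f φ)) ∂(gaussianProduct n ψ) := by
  have hc := cGamma_pos hγ
  refine ⟨1 + (cGamma γ)⁻¹, by positivity, fun Φl Φr n hn ψ hψ f hf hfc ↦ ?_⟩
  have : IsProbabilityMeasure (gaussianProduct n ψ) := by
    rw [gaussianProduct]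
    infer_instance
  have hvar : ProbabilityTheory.variance f (gaussianProduct n ψ) =
      (∫ φ, f φ ^ 2 ∂(gaussianProduct n ψ)) - (∫ φ, f φ ∂(gaussianProduct n ψ)) ^ 2 :=
    ProbabilityTheory.variance_eq_sub (hf.continuous.memLp_of_hasCompactSupport hfc)
  have hle := variance_gaussianProduct_le_mul_integral_neg_GLgen hγ hn hψ hf hfc
  have hdirichlet : 0 ≤ ∫ φ, f φ * -GLgen γ Φl Φr n f φ ∂(gaussianProduct n ψ) :=
    nonneg_of_mul_nonneg_right ((ProbabilityTheory.variance_nonneg f _).trans hle) (by positivity)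
  rw [← hvar]
  refine hle.trans ?_
  rw [← Real.rpow_two]
  gcongr
  · exact_mod_cast one_le_two.trans hn
  · linarith

/-- Poincaré inequality for the non-equilibrium steady state: the variance
is bounded by `C n²` times the Dirichlet form of the generator, with `C` depending only
on `γ`. -/
theorem NESS_poincare_inequality
    (γ : ℝ) (hγ : γ ∈ Set.Ioo (1:ℝ) 2) :
    ∃ C : ℝ, 0 < C ∧ ∀ Φl Φr : ℝ, ∀ n : ℕ, 2 ≤ n →
      ∀ ψ : ℕ → ℝ, IsDiscreteProfile γ Φl Φr n ψ →
      ∀ f : Conf n → ℝ, ContDiff ℝ (⊤ : ℕ∞) f → HasCompactSupport f →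
        (∫ φ, (f φ) ^ 2 ∂(gaussianProduct n ψ)) - (∫ φ, f φ ∂(gaussianProduct n ψ)) ^ 2
          ≤ C * (n : ℝ) ^ 2 *
            ∫ φ, f φ * (-(GLgen γ Φl Φr n f φ)) ∂(gaussianProduct n ψ) := by
  obtain ⟨C, hC, h⟩ := NESS_poincare_inequality_general (zero_lt_one.trans hγ.1)
  exact ⟨C, hC, fun Φl Φr n hn ψ hψ f hf ↦ h Φl Φr n hn ψ hψ f (contDiff_infty.1 hf 2)⟩
end
end
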